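/- Let k be a differential field of characteristic zero whose field of constants C is algebraically closed, and let k ⊂ K ⊆ E be differential fields with E a strongly normal extension of k. If there is a field embedding of K, fixing k pointwise, into a purely transcendental field extension k(Xᵢ : i ∈ I) of k (a rational function field over k in a family of independent variables), then there exists an intermediate differential field L with k ⊆ K ⊆ L ⊆ E such that L is a Picard–Vessiot extension of k for some monic linear differential operator over k. -/

import Mathlib

universe u

/-- A bundled differential field of characteristic zero: a field together with a derivation,
given as a raw function satisfying additivity and the Leibniz rule. -/
structure DFld : Type (u + 1) where
  carrier : Type u
  [fieldInst : Field carrier]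
  [charZeroInst : CharZero carrier]
  deriv : carrier → carrier
  deriv_add : ∀ a b, deriv (a + b) = deriv a + deriv b
  deriv_mul : ∀ a b, deriv (a * b) = deriv a * b + a * deriv b

attribute [instance] DFld.fieldInst DFld.charZeroInst

/-- The result of applying the monic linear differential operator
`∂^n + a_{n-1} ∂^{n-1} + ⋯ + a_1 ∂ + a_0` (with coefficients `a`) to `y`,
where the derivation is given by `D`. -/
def LApply {E : Type u} [Field E] (D : E → E) (n : ℕ) (a : Fin n → E) (y : E) : E :=
  D^[n] y + ∑ i : Fin n, a i * D^[(i : ℕ)] y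

/-- `diffGen D k S` is the smallest differential subfield (w.r.t. the derivation `D`)
containing the subfield `k` and the set `S`; i.e. the differential field `k⟨S⟩`. -/
def diffGen {E : Type u} [Field E] (D : E → E) (k : Subfield E) (S : Set E) : Subfield E :=
  sInf {F : Subfield E | k ≤ F ∧ S ⊆ ↑F ∧ ∀ x ∈ F, D x ∈ F}

/-- The subfield of constants of a differential subfield `k`: `{x ∈ k | D x = 0}`. -/
def constantsOf {E : Type u} [Field E] (D : Derivation ℤ E E) (k : Subfield E) : Subfield E where
  carrier := {x | x ∈ k ∧ D x = 0}
  zero_mem' := ⟨k.zero_mem, map_zero D⟩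
  one_mem' := ⟨k.one_mem, D.map_one_eq_zero⟩
  add_mem' := by
    rintro a b ⟨hak, ha0⟩ ⟨hbk, hb0⟩
    exact ⟨k.add_mem hak hbk, by rw [map_add, ha0, hb0, add_zero]⟩
  neg_mem' := by
    rintro a ⟨hak, ha0⟩
    exact ⟨k.neg_mem hak, by rw [map_neg, ha0, neg_zero]⟩
  mul_mem' := by
    rintro a b ⟨hak, ha0⟩ ⟨hbk, hb0⟩
    exact ⟨k.mul_mem hak hbk, by
      rw [Derivation.leibniz, ha0, hb0, smul_zero, smul_zero, add_zero]⟩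
  inv_mem' := by
    rintro x ⟨hxk, hx0⟩
    refine ⟨k.inv_mem hxk, ?_⟩
    by_cases h : x = 0
    · simp [h]
    · have h1 : D (x * x⁻¹) = 0 := by rw [mul_inv_cancel₀ h, D.map_one_eq_zero]
      rw [Derivation.leibniz, hx0, smul_zero, add_zero, smul_eq_mul] at h1
      exact (mul_eq_zero.mp h1).resolve_left h

/-- `F` is a Picard–Vessiot extension of `k` (inside a common differential field) for the
monic linear differential operator of order `n` with (lower-order) coefficients `a`:
both are differential subfields, the constants of `F` equal the constants of `k`,
the coefficients lie in `k`, and `F` is differentially generated over `k` by an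
`n`-dimensional vector space (over the constants) of solutions. -/
def IsPVWith {E : Type u} [Field E] (D : E → E) (k F : Subfield E) (n : ℕ)
    (a : Fin n → E) : Prop :=
  k ≤ F ∧ (∀ x ∈ k, D x ∈ k) ∧ (∀ x ∈ F, D x ∈ F) ∧
  (∀ x ∈ F, D x = 0 → x ∈ k) ∧
  (∀ i, a i ∈ k) ∧
  ∃ y : Fin n → E,
    (∀ i, y i ∈ F) ∧
    (∀ i, LApply D n a (y i) = 0) ∧
    (∀ c : Fin n → E, (∀ i, c i ∈ k ∧ D (c i) = 0) → (∑ i, c i * y i) = 0 → ∀ i, c i = 0) ∧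
    diffGen D k (Set.range y) = F

/-- `F` is a Picard–Vessiot extension of `k` for some monic linear differential operator. -/
def IsPV {E : Type u} [Field E] (D : E → E) (k F : Subfield E) : Prop :=
  ∃ (n : ℕ) (a : Fin n → E), IsPVWith D k F n a

/-- Relative version: the differential subfield `F` is a Picard–Vessiot extension
of the differential subfield `kb ≤ F`. -/
def IsPVRel {E : Type u} [Field E] (D : E → E) (kb F : Subfield E)
    (hF : ∀ x ∈ F, D x ∈ F) : Prop :=
  IsPV (fun x : ↥F => (⟨D ↑x, hF ↑x x.2⟩ : ↥F)) (Subfield.comap F.subtype kb) ⊤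

/-- The ambient differential field (with derivation `D`) is a strongly normal extension of
its differential subfield `k`: it is finitely generated as a field extension of `k`, has no
new constants, and every differential embedding over `k` into a differential field extension
`M` lands in the compositum of the image of the base copy with the constants of `M`. -/
def IsSN {E : Type u} [Field E] (D : E → E) (k : Subfield E) : Prop :=
  (∀ x ∈ k, D x ∈ k) ∧
  (∃ s : Finset E, Subfield.closure (↑k ∪ ↑s) = (⊤ : Subfield E)) ∧
  (∀ x : E, D x = 0 → x ∈ k) ∧
  ∀ (M : DFld.{u}) (ι σ : E →+* M.carrier),
    (∀ x, ι (D x) = M.deriv (ι x)) →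
    (∀ x, σ (D x) = M.deriv (σ x)) →
    (∀ x ∈ k, σ x = ι x) →
    ∀ e : E, σ e ∈ Subfield.closure (Set.range ι ∪ {m : M.carrier | M.deriv m = 0})

/-- Relative version: the differential subfield `F` is a strongly normal extension of the
differential subfield `kb ≤ F`. -/
def IsSNRel {E : Type u} [Field E] (D : E → E) (kb F : Subfield E)
    (hF : ∀ x ∈ F, D x ∈ F) : Prop :=
  IsSN (fun x : ↥F => (⟨D ↑x, hF ↑x x.2⟩ : ↥F)) (Subfield.comap F.subtype kb)

/-- `K` is a finite field extension of the subfield `M`. -/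
def FinExt {E : Type u} [Field E] (M K : Subfield E) : Prop :=
  ∃ h : M ≤ K,
    letI : Algebra ↥M ↥K := (Subfield.inclusion h).toAlgebra
    Module.Finite ↥M ↥K

/-- The transcendence degree of the subfield `K` over the subfield `k`, as the supremum of the
cardinalities of subsets of `K` that are algebraically independent over `k`. -/
noncomputable def trdegOf {E : Type u} [Field E] (k K : Subfield E) : Cardinal.{u} :=
  ⨆ s : {s : Set E // s ⊆ (K : Set E) ∧ AlgebraicIndependent ↥k (fun x : ↥s => (x : E))},
    Cardinal.mk ↥(s.1)

/-- `K` and `M` are free over `k`: every finite subset of `K` that is algebraically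
independent over `k` remains algebraically independent over `M`. -/
def FreeOver {E : Type u} [Field E] (k K M : Subfield E) : Prop :=
  ∀ s : Finset E, (↑s : Set E) ⊆ (K : Set E) →
    AlgebraicIndependent ↥k (fun x : ↥(↑s : Set E) => (x : E)) →
    AlgebraicIndependent ↥M (fun x : ↥(↑s : Set E) => (x : E))

/-- `K` is a `k`-irreducible differential field: it is a finitely generated differential field
extension of `k` of transcendence degree at least 1, and every intermediate differential field
`k ⊂ M ⊆ K` has transcendence degree `0` or `trdeg(K|k)` over `k`. -/
def IsIrred {E : Type u} [Field E] (D : E → E) (k K : Subfield E) : Prop :=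
  (∃ s : Finset E, diffGen D k ↑s = K) ∧
  1 ≤ trdegOf k K ∧
  ∀ M : Subfield E, (∀ x ∈ M, D x ∈ M) → k < M → M ≤ K →
    trdegOf k M = 0 ∨ trdegOf k M = trdegOf k K

/-- `Kf` is a `d`-solvable extension of `k`: there is a tower of differential fields starting
at (a copy of) `k`, each step being a finite algebraic extension or a Picard–Vessiot extension
for an operator of order at most `d`, whose top contains (the copy of) `Kf`. -/
def IsDSolvable {E : Type u} [Field E] (D : E → E) (k Kf : Subfield E) (d : ℕ) : Prop :=
  ∃ (Ω : DFld.{u}) (j : E →+* Ω.carrier),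
    (∀ x, j (D x) = Ω.deriv (j x)) ∧
    ∃ (r : ℕ) (T : Fin (r + 1) → Subfield Ω.carrier),
      T 0 = Subfield.map j k ∧
      Subfield.map j Kf ≤ T (Fin.last r) ∧
      (∀ i, ∀ x ∈ T i, Ω.deriv x ∈ T i) ∧
      ∀ i : Fin r,
        FinExt (T i.castSucc) (T i.succ) ∨
        ∃ n ≤ d, ∃ a : Fin n → Ω.carrier, IsPVWith Ω.deriv (T i.castSucc) (T i.succ) n a

/-- `Kn` is generated over `kb`, as a differential field with the same constants, by one
solution `z` of an inhomogeneous equation `L(y) = b` (with `L` monic over `kb` of order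
`n ≤ d` and `b ∈ kb`) together with an `n`-dimensional space (over the constants) of
solutions of `L(y) = 0`. -/
def IsPVInhomLe {E : Type u} [Field E] (D : E → E) (kb Kn : Subfield E) (d : ℕ) : Prop :=
  kb ≤ Kn ∧ (∀ x ∈ kb, D x ∈ kb) ∧ (∀ x ∈ Kn, D x ∈ Kn) ∧
  (∀ x ∈ Kn, D x = 0 → x ∈ kb) ∧
  ∃ n, n ≤ d ∧ ∃ (a : Fin n → E) (b z : E) (y : Fin n → E),
    (∀ i, a i ∈ kb) ∧ b ∈ kb ∧ z ∈ Kn ∧ (∀ i, y i ∈ Kn) ∧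
    LApply D n a z = b ∧
    (∀ i, LApply D n a (y i) = 0) ∧
    (∀ c : Fin n → E, (∀ i, c i ∈ kb ∧ D (c i) = 0) → (∑ i, c i * y i) = 0 → ∀ i, c i = 0) ∧
    diffGen D kb (insert z (Set.range y)) = Kn

/-- `Kf` is a `d⁺`-solvable extension of `k`. -/
def IsDPlusSolvable {E : Type u} [Field E] (D : E → E) (k Kf : Subfield E) (d : ℕ) : Prop :=
  ∃ (Ω : DFld.{u}) (j : E →+* Ω.carrier),
    (∀ x, j (D x) = Ω.deriv (j x)) ∧
    ∃ (r : ℕ) (T : Fin (r + 1) → Subfield Ω.carrier),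
      T 0 = Subfield.map j k ∧
      Subfield.map j Kf ≤ T (Fin.last r) ∧
      (∀ i, ∀ x ∈ T i, Ω.deriv x ∈ T i) ∧
      ∀ i : Fin r,
        FinExt (T i.castSucc) (T i.succ) ∨ IsPVInhomLe Ω.deriv (T i.castSucc) (T i.succ) d

/-- `TSet D kb K` is the set of elements of `K` annihilated by some monic linear differential
operator with coefficients in `kb`. -/
def TSet {E : Type u} [Field E] (D : E → E) (kb K : Subfield E) : Set E :=
  {x | x ∈ K ∧ ∃ (n : ℕ) (a : Fin n → E), (∀ i, a i ∈ kb) ∧ LApply D n a x = 0}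

/-!
Let `C` be the constants of `k` and `F` the fraction field of `E ⊗ₖ K`. By strong normality,
applied in an amalgam of `F` and `E` over `K`, an element `x` of `K`, placed in the right factor,
is a quotient of elements of `E[S]` for a finitely generated `C`-algebra `S` of constants of `F`.
The embedding of `K` into `k(Xᵢ)`, followed by specialisation of `E` at a general point, embeds `S`
into a rational function field `C(t)`. As `E ⊗ C(t)` is a unique factorisation domain, `x` becomes
a fraction `α / β` in lowest terms. The element `x` of the right factor does not move when `E` is
embedded elsewhere, so any two embeddings of `E` carry `α` and `β` to proportional pairs, and the
finite-dimensional `C`-space spanned by the coefficients of `α` and `β` is preserved up to constants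
and one common factor. Dividing `n`-fold products by an `n × n` Wronskian removes this factor.

A finite-dimensional `C`-space preserved by all embeddings plays the role of a space stable under
the differential Galois group: the monic operator annihilating it has coefficients fixed by all
embeddings, hence in `k`. Since `K` is finitely generated over `k`, finitely many such spaces
generate a Picard–Vessiot extension containing `K`.
-/

open scoped Differential TensorProduct

namespace StronglyNormal

/-! ### Constants and Wronskians -/

section Differential

variable {R S : Type*} [CommRing R] [Differential R] [CommRing S] [Differential S]

/-- A ring homomorphism is differential if it commutes with the derivations. -/
def IsDifferentialHom (f : R →+* S) : Prop := ∀ x, f x′ = (f x)′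

theorem IsDifferentialHom.map_iterate {f : R →+* S} (hf : IsDifferentialHom f) (r : ℕ) (x : R) :
    f (Differential.deriv^[r] x) = Differential.deriv^[r] (f x) :=
  Function.Semiconj.iterate_right (f := f) hf r x

theorem iterate_deriv_mul (n : ℕ) (a b : R) :
    Differential.deriv^[n] (a * b) = ∑ p ∈ Finset.HasAntidiagonal.antidiagonal n,
      n.choose p.1 • (Differential.deriv^[p.1] a * Differential.deriv^[p.2] b) := by
  induction n with
  | zero => simp
  | succ n ih =>
    rw [Finset.sum_antidiagonal_choose_succ_nsmul
        (fun i j ↦ Differential.deriv^[i] a * Differential.deriv^[j] b),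
      Function.iterate_succ_apply', ih, map_sum, ← Finset.sum_add_distrib]
    refine Finset.sum_congr rfl fun p hp ↦ ?_
    rw [map_nsmul, Derivation.leibniz,
      Nat.choose_symm_of_eq_add (Finset.HasAntidiagonal.mem_antidiagonal.1 hp).symm, ← nsmul_add]
    simp only [Function.iterate_succ_apply', smul_eq_mul, mul_comm]

theorem iterate_deriv_sum_mul {ι : Type*} (s : Finset ι) {c : ι → R} (hc : ∀ i, (c i)′ = 0)
    (y : ι → R) (r : ℕ) :
    Differential.deriv^[r] (∑ i ∈ s, c i * y i) = ∑ i ∈ s, c i * Differential.deriv^[r] (y i) := by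
  induction r with
  | zero => rfl
  | succ r ih => simp [Function.iterate_succ_apply', ih, hc]

/-- The Wronskian matrix of `y`, whose `r`-th row consists of the `r`-th derivatives. -/
def wronskian {n : ℕ} (y : Fin n → R) : Matrix (Fin n) (Fin n) R :=
  .of fun r j ↦ Differential.deriv^[r] (y j)

theorem wronskian_map {f : R →+* S} (hf : IsDifferentialHom f) {n : ℕ} (y : Fin n → R) :
    wronskian (f ∘ y) = (wronskian y).map f := by
  ext r j
  exact (hf.map_iterate r (y j)).symm

theorem wronskian_mul {n : ℕ} {c : Matrix (Fin n) (Fin n) R} (hc : ∀ i j, (c i j)′ = 0)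
    (y : Fin n → R) : wronskian (fun j ↦ ∑ i, c i j * y i) = wronskian y * c := by
  ext r j
  simp [wronskian, Matrix.mul_apply, iterate_deriv_sum_mul _ (hc · j), mul_comm]

theorem det_wronskian_const_mul {n : ℕ} (m : R) (y : Fin n → R) :
    (wronskian fun j ↦ m * y j).det = m ^ n * (wronskian y).det := by
  let A : Matrix (Fin n) (Fin n) R :=
    .of fun r s ↦ if s ≤ r then (r : ℕ).choose s • Differential.deriv^[r - s] m else 0
  have hA : wronskian (fun j ↦ m * y j) = A * wronskian y := by
    ext r j
    simp only [wronskian, A, Matrix.of_apply, Matrix.mul_apply, mul_comm m, iterate_deriv_mul,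
      Finset.Nat.sum_antidiagonal_eq_sum_range_succ_mk, Nat.succ_eq_add_one, ← Fin.val_fin_le]
    rw [Fin.sum_univ_eq_sum_range fun s ↦ (if s ≤ (r : ℕ) then (r : ℕ).choose s •
      Differential.deriv^[r - s] m else 0) * Differential.deriv^[s] (y j),
      ← Finset.sum_subset (Finset.range_subset_range.2 r.2)]
    · refine Finset.sum_congr rfl fun s hs ↦ ?_
      rw [if_pos (Finset.mem_range_succ_iff.1 hs), smul_mul_assoc, mul_comm]
    · intro s _ hs
      rw [if_neg (hs ∘ Finset.mem_range_succ_iff.2), zero_mul]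
  rw [hA, Matrix.det_mul, Matrix.det_of_isLowerTriangular]
  · simp [A]
  · exact fun r s hrs ↦ if_neg (not_le.2 hrs)

end Differential

section Field

variable {C E : Type*} [Field C] [Field E] [Differential E] [Algebra C E]

theorem det_wronskian_ne_zero [Differential.ContainConstants C E] {n : ℕ} {y : Fin n → E}
    (hy : LinearIndependent C y) : (wronskian y).det ≠ 0 := by
  induction n with
  | zero => simp
  | succ n ih =>
    have eq_zero_of_init (w : Fin n → E)
        (hw : ∀ r : Fin n, ∑ j, w j * Differential.deriv^[r] (y j.castSucc) = 0) : w = 0 :=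
      Matrix.eq_zero_of_mulVec_eq_zero (ih (hy.comp _ (Fin.castSucc_injective n))) <| by
        ext r
        simpa [Matrix.mulVec, dotProduct, wronskian, mul_comm] using hw r
    intro hdet
    obtain ⟨v, hv, hWv⟩ := Matrix.exists_mulVec_eq_zero_iff.2 hdet
    have sum_eq_zero (r : ℕ) (hr : r < n + 1) : ∑ j, v j * Differential.deriv^[r] (y j) = 0 := by
      simpa [Matrix.mulVec, dotProduct, wronskian, mul_comm] using congrFun hWv ⟨r, hr⟩
    have hlast : v (.last n) ≠ 0 := by
      intro h
      have hinit := eq_zero_of_init (v ∘ Fin.castSucc) fun r ↦ by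
        simpa [Fin.sum_univ_castSucc, h] using sum_eq_zero r (by lia)
      exact hv (funext (Fin.lastCases h (congrFun hinit)))
    let u j := v j / v (.last n)
    have hu_last : u (.last n) = 1 := div_self hlast
    have sum_u (r : ℕ) (hr : r < n + 1) : ∑ j, u j * Differential.deriv^[r] (y j) = 0 := by
      simp only [u, div_mul_eq_mul_div, ← Finset.sum_div, sum_eq_zero r hr, zero_div]
    have hu (j) : (u j)′ = 0 := by
      refine Fin.lastCases (by simp [hu_last]) (congrFun (eq_zero_of_init _ fun r ↦ ?_)) j
      have h := congrArg Differential.deriv (sum_u r (by lia))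
      have h' := sum_u (r + 1) (by lia)
      simp only [Function.iterate_succ_apply', Fin.sum_univ_castSucc, hu_last] at h'
      simp only [Fin.sum_univ_castSucc, hu_last, map_add, map_sum, map_zero, Derivation.leibniz,
        Derivation.map_one_eq_zero, smul_eq_mul, Finset.sum_add_distrib, mul_zero, add_zero,
        mul_comm (Differential.deriv^[_] _) (_′)] at h
      linear_combination h - h'
    choose c hc using fun j ↦ mem_range_of_deriv_eq_zero C (hu j)
    have hc0 := Fintype.linearIndependent_iff.1 hy c
      (by simpa [Algebra.smul_def, hc] using sum_u 0 (by lia)) (.last n)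
    exact one_ne_zero (hu_last.symm.trans (by rw [← hc, hc0, map_zero]))

theorem linearIndependent_comp [Differential.ContainConstants C E] {F M : Type*} [Field F]
    [Field M] [Differential M] [Algebra F M] (hF : ∀ c : F, (algebraMap F M c)′ = 0)
    {f : E →+* M} (hf : IsDifferentialHom f) {ι : Type*} {y : ι → E}
    (hy : LinearIndependent C y) : LinearIndependent F (f ∘ y) := by
  rw [linearIndependent_iff_finset_linearIndependent] at hy ⊢
  intro s
  have hW := det_wronskian_ne_zero ((linearIndependent_equiv s.equivFin.symm).2 (hy s))
  rw [← linearIndependent_equiv s.equivFin.symm]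
  rw [Fintype.linearIndependent_iff]
  intro c hc
  have hW' := (map_ne_zero f).2 hW
  rw [RingHom.map_det, RingHom.mapMatrix_apply, ← wronskian_map hf] at hW'
  have := Matrix.eq_zero_of_mulVec_eq_zero hW' (v := fun i ↦ algebraMap F M (c i)) ?_
  · simpa [funext_iff] using this
  · ext r
    have := congrArg (Differential.deriv^[(r : ℕ)]) hc
    simp only [Algebra.smul_def] at this
    rw [iterate_deriv_sum_mul _ (fun i ↦ hF (c i)), iterate_map_zero] at this
    simpa [Matrix.mulVec, dotProduct, wronskian, mul_comm] using this

end Field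

/-! ### Extending derivations -/

section Extension

open PowerSeries

theorem exists_derivation_algebraMap_eq {R S : Type*} [CommRing R] [CommRing S] [Algebra R S]
    [Algebra.FormallyEtale R S] (d : Derivation ℤ R S) :
    ∃ D : Derivation ℤ S S, ∀ r, D (algebraMap R S r) = d r := by
  let l : Ω[S⁄ℤ] →ₗ[S] S := LinearMap.liftBaseChange S d.liftKaehlerDifferential ∘ₗ
    (KaehlerDifferential.tensorKaehlerEquivOfFormallyEtale ℤ R S).symm.toLinearMap
  refine ⟨l.compDer (KaehlerDifferential.D ℤ S), fun r ↦ ?_⟩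
  simp [l, KaehlerDifferential.tensorKaehlerEquivOfFormallyEtale_symm_D_algebraMap]

theorem exists_differentialAlgebra (R S : Type*) [CommRing R] [CommRing S] [Algebra R S]
    [Algebra.FormallyEtale R S] [Differential R] :
    ∃ _ : Differential S, DifferentialAlgebra R S := by
  obtain ⟨D, hD⟩ := exists_derivation_algebraMap_eq (S := S)
    ((Algebra.linearMap R S).compDer (Differential.deriv (R := R)))
  let _ : Differential S := ⟨D⟩
  exact ⟨inferInstance, ⟨hD⟩⟩

theorem IsDifferentialHom.of_comp_algebraMap {R F M : Type*} [CommRing R] [IsDomain R] [Field F]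
    [Algebra R F] [IsFractionRing R F] [Differential F] [CommRing M] [Differential M] {f : F →+* M}
    (hf : ∀ r, f (algebraMap R F r)′ = (f (algebraMap R F r))′) : IsDifferentialHom f := by
  intro x
  obtain ⟨a, b, hb, rfl⟩ := IsFractionRing.div_surjective (A := R) x
  have hb0 : algebraMap R F b ≠ 0 := IsFractionRing.to_map_ne_zero_of_mem_nonZeroDivisors hb
  have hfb : IsUnit (f (algebraMap R F b)) := (IsUnit.mk0 _ hb0).map f
  have hq := congrArg Differential.deriv (div_mul_cancel₀ (algebraMap R F a) hb0)
  have hfq := congrArg Differential.deriv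
    (congrArg f (div_mul_cancel₀ (algebraMap R F a) hb0))
  rw [map_mul, Derivation.leibniz, ← hf, ← hf, ← hq, Derivation.leibniz] at hfq
  simp only [smul_eq_mul, map_add, map_mul] at hfq
  exact hfb.mul_left_cancel (by linear_combination -hfq)

/-- The differential ring structure given by an additive map satisfying the Leibniz rule. -/
abbrev differentialOfLeibniz {R : Type*} [CommRing R] (d : R →+ R)
    (hd : ∀ a b, d (a * b) = a * d b + b * d a) : Differential R :=
  ⟨.mk' d.toIntLinearMap hd⟩

/-- The differential ring of formal power series with the derivation `d/dX`. -/
noncomputable scoped instance {Ω : Type*} [CommRing Ω] : Differential Ω⟦X⟧ :=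
  differentialOfLeibniz (derivative Ω) (derivative Ω).leibniz

/-- The Taylor expansion `x ↦ ∑ φ(x⁽ⁿ⁾) Xⁿ / n!` of a ring homomorphism `φ` from a differential
ring; it turns ring homomorphisms into differential ones. -/
noncomputable def taylor {R Ω : Type*} [CommRing R] [Differential R] [Field Ω] [CharZero Ω]
    (φ : R →+* Ω) : R →+* Ω⟦X⟧ where
  toFun x := .mk fun n ↦ φ (Differential.deriv^[n] x) / n.factorial
  map_zero' := by
    ext n
    simp [iterate_map_zero]
  map_one' := by
    ext n
    cases n <;> simp [coeff_one]
  map_add' x y := by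
    ext n
    simp [iterate_map_add, add_div]
  map_mul' x y := by
    ext n
    rw [coeff_mul, coeff_mk, iterate_deriv_mul, map_sum, Finset.sum_div]
    refine Finset.sum_congr rfl fun p hp ↦ ?_
    rw [Finset.HasAntidiagonal.mem_antidiagonal] at hp
    subst hp
    have := Nat.cast_ne_zero (R := Ω).2 (Nat.choose_pos (Nat.le_add_left p.2 p.1)).ne'
    rw [map_nsmul, map_mul, nsmul_eq_mul, coeff_mk, coeff_mk, Nat.choose_symm_add,
      ← Nat.add_choose_mul_factorial_mul_factorial]
    push_cast
    field_simp

variable {R S Ω : Type*} [CommRing R] [Differential R] [CommRing S] [Differential S] [Field Ω]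
  [CharZero Ω]

theorem coeff_taylor (φ : R →+* Ω) (x : R) (n : ℕ) :
    coeff n (taylor φ x) = φ (Differential.deriv^[n] x) / n.factorial :=
  coeff_mk n fun n ↦ φ (Differential.deriv^[n] x) / n.factorial

theorem isDifferentialHom_taylor (φ : R →+* Ω) : IsDifferentialHom (taylor φ) := by
  intro x
  ext n
  have := n.cast_add_one_ne_zero (R := Ω)
  change _ = coeff n (derivative Ω _)
  rw [coeff_derivative, coeff_taylor, coeff_taylor, Function.iterate_succ_apply, Nat.factorial_succ]
  push_cast
  field_simp

theorem constantCoeff_comp_taylor (φ : R →+* Ω) : constantCoeff.comp (taylor φ) = φ := by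
  ext x
  simp [← coeff_zero_eq_constantCoeff, coeff_taylor]

theorem taylor_comp (φ : S →+* Ω) {f : R →+* S} (hf : IsDifferentialHom f) :
    taylor (φ.comp f) = (taylor φ).comp f := by
  ext x n
  simp [coeff_taylor, hf.map_iterate]

universe v in
theorem exists_isAlgClosed_differentialAlgebra (R : Type v) [CommRing R] [IsDomain R] [CharZero R]
    [Differential R] :
    ∃ (M : Type v) (_ : Field M) (_ : CharZero M) (_ : IsAlgClosed M) (_ : Differential M)
      (_ : Algebra R M), FaithfulSMul R M ∧ DifferentialAlgebra R M := by
  have : Algebra.FormallyEtale R (FractionRing R) := .of_isLocalization (nonZeroDivisors R)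
  obtain ⟨_, hF⟩ := exists_differentialAlgebra R (FractionRing R)
  have : CharZero (FractionRing R) := IsFractionRing.charZero R
  have : Algebra.FormallyEtale (FractionRing R) (AlgebraicClosure (FractionRing R)) :=
    .of_isSeparable _ _
  obtain ⟨_, hM⟩ := exists_differentialAlgebra (FractionRing R) (AlgebraicClosure (FractionRing R))
  refine ⟨AlgebraicClosure (FractionRing R), inferInstance, inferInstance, inferInstance, ‹_›,
    inferInstance, .trans R (FractionRing R) _, ⟨fun x ↦ ?_⟩⟩
  rw [IsScalarTower.algebraMap_apply R (FractionRing R), hM.deriv_algebraMap, hF.deriv_algebraMap,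
    ← IsScalarTower.algebraMap_apply]

end Extension

section Constants

/-- The field of constants of a differential field. -/
abbrev constants (M : Type*) [Field M] [Differential M] : Subfield M :=
  constantsOf Differential.deriv ⊤

variable {M : Type*} [Field M] [Differential M]

theorem mem_constants {x : M} : x ∈ constants M ↔ x′ = 0 :=
  and_iff_right (a := x ∈ (⊤ : Subfield M)) trivial

theorem deriv_eq_zero_of_isAlgebraic [CharZero M] {x : M} (hx : IsAlgebraic (constants M) x) :
    x′ = 0 := by
  let d : Derivation (constants M) M M := .mk'
    { Differential.deriv (R := M) with
      map_smul' c y := by simp [Subfield.smul_def, mem_constants.1 c.2] }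
    Differential.deriv.leibniz
  have h := d.comp_aeval_eq x (minpoly (constants M) x)
  rw [minpoly.aeval, map_zero, eq_comm, smul_eq_zero] at h
  exact h.resolve_left <| (minpoly.irreducible hx.isIntegral).separable.aeval_derivative_ne_zero
      (minpoly.aeval _ x)

instance isAlgClosed_constants [CharZero M] [IsAlgClosed M] : IsAlgClosed (constants M) :=
  .of_exists_root _ fun p _ hp ↦ by
    obtain ⟨x, hx⟩ := IsAlgClosed.exists_aeval_eq_zero M p
      (Polynomial.degree_pos_of_irreducible hp).ne'
    have hx' := deriv_eq_zero_of_isAlgebraic ⟨p, hp.ne_zero, hx⟩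
    refine ⟨⟨x, mem_constants.2 hx'⟩, (algebraMap (constants M) M).injective ?_⟩
    rwa [map_zero, ← Polynomial.aeval_algebraMap_apply_eq_algebraMap_eval]

end Constants

/-! ### Amalgamation of fields and of differential fields -/

section Amalgamation

universe v w

theorem exists_field_amalgam {k A : Type*} {F₁ : Type v} {F₂ : Type w} [CommRing k] [CommRing A]
    [IsDomain A] [Field F₁] [Field F₂] [Algebra k A] [Algebra k F₁] [Algebra k F₂]
    {f₁ : A →ₐ[k] F₁} {f₂ : A →ₐ[k] F₂} (h₁ : Function.Injective f₁) (h₂ : Function.Injective f₂) :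
    ∃ (Ω : Type (max v w)) (_ : Field Ω) (_ : Algebra k Ω) (g₁ : F₁ →ₐ[k] Ω) (g₂ : F₂ →ₐ[k] Ω),
      g₁.comp f₁ = g₂.comp f₂ := by
  let Q := FractionRing A
  let _ : Algebra Q F₁ := (IsFractionRing.lift (g := (f₁ : A →+* F₁)) h₁).toAlgebra
  let _ : Algebra Q F₂ := (IsFractionRing.lift (g := (f₂ : A →+* F₂)) h₂).toAlgebra
  have hf₁ (a) : algebraMap Q F₁ (algebraMap A Q a) = f₁ a := IsFractionRing.lift_algebraMap h₁ a
  have hf₂ (a) : algebraMap Q F₂ (algebraMap A Q a) = f₂ a := IsFractionRing.lift_algebraMap h₂ a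
  obtain ⟨m, hm⟩ := Ideal.exists_maximal (F₁ ⊗[Q] F₂)
  let _ := Ideal.Quotient.field m
  let g₁ : F₁ →ₐ[k] (F₁ ⊗[Q] F₂) ⧸ m :=
    (Ideal.Quotient.mkₐ k m).comp Algebra.TensorProduct.includeLeft
  let g₂ : F₂ →+* (F₁ ⊗[Q] F₂) ⧸ m :=
    (Ideal.Quotient.mk m).comp
      (Algebra.TensorProduct.includeRight : F₂ →ₐ[Q] F₁ ⊗[Q] F₂).toRingHom
  have hg (a : A) : g₁ (f₁ a) = g₂ (f₂ a) := by
    rw [← hf₁, ← hf₂]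
    exact congrArg (Ideal.Quotient.mk m) (Algebra.TensorProduct.tmul_one_eq_one_tmul _)
  refine ⟨_, inferInstance, inferInstance, g₁, { g₂ with commutes' := fun r ↦ ?_ }, AlgHom.ext hg⟩
  have := hg (algebraMap k A r)
  rw [f₁.commutes, f₂.commutes, g₁.commutes] at this
  exact this.symm

theorem exists_algHom_algebraicClosure_ne {k E : Type u} [Field k] [CharZero k] [Field E]
    [Algebra k E] {e : E} (he : e ∉ Set.range (algebraMap k E)) :
    ∃ (A : Type u) (_ : CommRing A) (_ : IsDomain A) (_ : Algebra k A) (f : A →ₐ[k] E)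
      (g : A →ₐ[k] AlgebraicClosure E) (a : A), Function.Injective f ∧ Function.Injective g ∧
        f a = e ∧ g a ≠ algebraMap E _ e := by
  by_cases halg : IsAlgebraic k e
  · have hp := minpoly.irreducible halg.isIntegral
    have := Fact.mk hp
    have hcard := Polynomial.card_rootSet_eq_natDegree (K := AlgebraicClosure E) hp.separable
      (IsAlgClosed.splits _)
    have hdeg : 1 < (minpoly k e).natDegree := by
      refine lt_of_le_of_ne hp.natDegree_pos fun h ↦ he ?_
      rw [← RingHom.coe_range, SetLike.mem_coe, ← minpoly.degree_eq_one_iff,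
        Polynomial.degree_eq_natDegree hp.ne_zero, ← h, Nat.cast_one]
    rw [← hcard, Fintype.one_lt_card_iff_nontrivial] at hdeg
    have he' : algebraMap E (AlgebraicClosure E) e ∈ (minpoly k e).rootSet _ := by
      simp [Polynomial.mem_rootSet, hp.ne_zero, Polynomial.aeval_algebraMap_apply, minpoly.aeval]
    obtain ⟨⟨r, hr⟩, hne⟩ := exists_ne (⟨_, he'⟩ : (minpoly k e).rootSet (AlgebraicClosure E))
    refine ⟨AdjoinRoot (minpoly k e), inferInstance, inferInstance, inferInstance,
      AdjoinRoot.liftAlgHom _ (Algebra.ofId k E) e (minpoly.aeval k e),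
      AdjoinRoot.liftAlgHom _ (Algebra.ofId k _) r (Polynomial.mem_rootSet.1 hr).2,
      AdjoinRoot.root _, RingHom.injective _, RingHom.injective _, AdjoinRoot.liftAlgHom_root ..,
      fun h ↦ hne (Subtype.ext ((AdjoinRoot.liftAlgHom_root ..).symm.trans h))⟩
  · have htr : Transcendental k (algebraMap E (AlgebraicClosure E) (e + 1)) := by
      rw [transcendental_algebraMap_iff (FaithfulSMul.algebraMap_injective _ _)]
      exact fun h ↦ halg (by simpa using h.sub (isAlgebraic_one (R := k)))
    exact ⟨Polynomial k, inferInstance, inferInstance, inferInstance, Polynomial.aeval e,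
      Polynomial.aeval (algebraMap E (AlgebraicClosure E) (e + 1)), Polynomial.X,
      transcendental_iff_injective.1 halg, transcendental_iff_injective.1 htr, by simp, by simp⟩

section Taylor

variable {k A B : Type*} {Ω : Type v} [CommRing k] [CommRing A] [CommRing B] [Field Ω] [CharZero Ω]
  [Differential k] [Differential A] [Differential B] [Algebra k A] [Algebra k B]
  [DifferentialAlgebra k A] [DifferentialAlgebra k B] [Algebra k Ω]

theorem exists_taylor_tensor (φ : A →ₐ[k] Ω) (ψ : B →ₐ[k] Ω) :
    ∃ h : A ⊗[k] B →+* PowerSeries Ω,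
      (∀ a, h (a ⊗ₜ 1) = taylor (φ : A →+* Ω) a) ∧ (∀ b, h (1 ⊗ₜ b) = taylor (ψ : B →+* Ω) b) ∧
      ∀ t, PowerSeries.constantCoeff (h t) = Algebra.TensorProduct.productMap φ ψ t := by
  let r := (taylor (φ : A →+* Ω)).comp (algebraMap k A)
  have hr : r = (taylor (ψ : B →+* Ω)).comp (algebraMap k B) := by
    rw [← taylor_comp _ fun x ↦ (deriv_algebraMap x).symm, ψ.comp_algebraMap, ← φ.comp_algebraMap,
      taylor_comp _ fun x ↦ (deriv_algebraMap x).symm]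
  let _ : Algebra k (PowerSeries Ω) := r.toAlgebra
  let f : A →ₐ[k] PowerSeries Ω := { taylor (φ : A →+* Ω) with commutes' := fun _ ↦ rfl }
  let g : B →ₐ[k] PowerSeries Ω :=
    { taylor (ψ : B →+* Ω) with commutes' := fun x ↦ (RingHom.congr_fun hr x).symm }
  let h := Algebra.TensorProduct.productMap f g
  refine ⟨h, fun a ↦ Algebra.TensorProduct.productMap_left_apply .., fun b ↦
    Algebra.TensorProduct.productMap_right_apply .., fun t ↦ ?_⟩
  induction t with
  | zero => simp
  | add s t hs ht => simpa using congrArg₂ (· + ·) hs ht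
  | tmul a b =>
    have hf : PowerSeries.constantCoeff (f a) = φ a :=
      RingHom.congr_fun (constantCoeff_comp_taylor (φ : A →+* Ω)) a
    have hg : PowerSeries.constantCoeff (g b) = ψ b :=
      RingHom.congr_fun (constantCoeff_comp_taylor (ψ : B →+* Ω)) b
    simp [h, hf, hg]

theorem exists_differential_amalgam (φ : A →ₐ[k] Ω) (ψ : B →ₐ[k] Ω) :
    ∃ (M : Type v) (_ : Field M) (_ : CharZero M) (_ : IsAlgClosed M) (_ : Differential M)
      (_ : Algebra k M) (f : A →ₐ[k] M) (g : B →ₐ[k] M),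
      IsDifferentialHom (f : A →+* M) ∧ IsDifferentialHom (g : B →+* M) ∧
      ∀ t : A ⊗[k] B, Algebra.TensorProduct.productMap f g t = 0 →
        Algebra.TensorProduct.productMap φ ψ t = 0 := by
  obtain ⟨h, hA, hB, hconst⟩ := exists_taylor_tensor φ ψ
  have : CharZero (PowerSeries Ω) :=
    charZero_of_injective_ringHom (PowerSeries.C_injective (R := Ω))
  obtain ⟨M, _, _, _, _, _, hinj, hM⟩ := exists_isAlgClosed_differentialAlgebra (PowerSeries Ω)
  let j := (algebraMap (PowerSeries Ω) M).comp h
  let _ : Algebra k M := (j.comp (algebraMap k (A ⊗[k] B))).toAlgebra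
  let jₐ : A ⊗[k] B →ₐ[k] M := { j with commutes' := fun _ ↦ rfl }
  let f := jₐ.comp Algebra.TensorProduct.includeLeft
  let g := jₐ.comp Algebra.TensorProduct.includeRight
  have hfg : Algebra.TensorProduct.productMap f g = jₐ := Algebra.TensorProduct.ext' fun a b ↦ by
    simp [f, g, ← map_mul]
  have hf (a) : f a = algebraMap (PowerSeries Ω) M (taylor (φ : A →+* Ω) a) := congrArg _ (hA a)
  have hg (b) : g b = algebraMap (PowerSeries Ω) M (taylor (ψ : B →+* Ω) b) := congrArg _ (hB b)
  refine ⟨M, ‹_›, ‹_›, ‹_›, ‹_›, inferInstance, f, g, fun a ↦ ?_, fun b ↦ ?_, fun t ht ↦ ?_⟩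
  · simp only [RingHom.coe_coe, hf, deriv_algebraMap, isDifferentialHom_taylor _ a]
  · simp only [RingHom.coe_coe, hg, deriv_algebraMap, isDifferentialHom_taylor _ b]
  · rw [hfg] at ht
    rw [← hconst, (FaithfulSMul.algebraMap_eq_zero_iff (PowerSeries Ω) M).1 ht, map_zero]

theorem exists_differential_fractionRing_tensorProduct (k A B : Type*) [Field k] [CommRing A]
    [CommRing B] [CharZero k] [Differential k] [Differential A] [Differential B] [Algebra k A]
    [Algebra k B] [DifferentialAlgebra k A] [DifferentialAlgebra k B] [IsDomain (A ⊗[k] B)] :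
    ∃ _ : Differential (FractionRing (A ⊗[k] B)),
      (∀ a : A, (algebraMap (A ⊗[k] B) (FractionRing (A ⊗[k] B)) (a ⊗ₜ 1))′ =
        algebraMap (A ⊗[k] B) (FractionRing (A ⊗[k] B)) (a′ ⊗ₜ 1)) ∧
      ∀ b : B, (algebraMap (A ⊗[k] B) (FractionRing (A ⊗[k] B)) (1 ⊗ₜ b))′ =
        algebraMap (A ⊗[k] B) (FractionRing (A ⊗[k] B)) (1 ⊗ₜ b′) := by
  let N := FractionRing (A ⊗[k] B)
  have : CharZero N := charZero_of_injective_algebraMap (algebraMap k N).injective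
  let φ : A →ₐ[k] N := (IsScalarTower.toAlgHom k (A ⊗[k] B) N).comp
    Algebra.TensorProduct.includeLeft
  let ψ : B →ₐ[k] N := (IsScalarTower.toAlgHom k (A ⊗[k] B) N).comp
    Algebra.TensorProduct.includeRight
  obtain ⟨h, hA, hB, hconst⟩ := exists_taylor_tensor φ ψ
  have hconst (t) : PowerSeries.constantCoeff (h t) = algebraMap (A ⊗[k] B) N t := by
    have hφψ : Algebra.TensorProduct.productMap φ ψ = IsScalarTower.toAlgHom k (A ⊗[k] B) N :=
      Algebra.TensorProduct.ext' fun a b ↦ by simp [φ, ψ, ← map_mul]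
    rw [hconst, hφψ, IsScalarTower.coe_toAlgHom']
  let d : Derivation ℤ (A ⊗[k] B) N := .mk'
    ((PowerSeries.coeff (R := N) 1).toAddMonoidHom.comp h.toAddMonoidHom).toIntLinearMap
    fun s t ↦ by
      change PowerSeries.coeff 1 (h (s * t)) =
        s • PowerSeries.coeff 1 (h t) + t • PowerSeries.coeff 1 (h s)
      rw [map_mul, PowerSeries.coeff_one_mul, hconst, hconst, Algebra.smul_def, Algebra.smul_def]
      ring
  have : Algebra.FormallyEtale (A ⊗[k] B) N := .of_isLocalization (nonZeroDivisors (A ⊗[k] B))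
  obtain ⟨D, hD⟩ := exists_derivation_algebraMap_eq (S := N) d
  refine ⟨⟨D⟩, fun a ↦ (hD _).trans ?_, fun b ↦ (hD _).trans ?_⟩
  · exact (congrArg (PowerSeries.coeff 1) (hA a)).trans (by simp [coeff_taylor, φ, N])
  · exact (congrArg (PowerSeries.coeff 1) (hB b)).trans (by simp [coeff_taylor, ψ, N])

end Taylor

theorem exists_differential_algHom_ne {k E : Type u} [Field k] [CharZero k] [Field E]
    [Algebra k E] [Differential k] [Differential E] [DifferentialAlgebra k E] {e : E}
    (he : e ∉ Set.range (algebraMap k E)) :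
    ∃ (M : Type u) (_ : Field M) (_ : CharZero M) (_ : IsAlgClosed M) (_ : Differential M)
      (_ : Algebra k M) (i σ : E →ₐ[k] M), IsDifferentialHom (i : E →+* M) ∧
        IsDifferentialHom (σ : E →+* M) ∧ i e ≠ σ e := by
  obtain ⟨A, _, _, _, f, g, a, hf, hg, rfl, hga⟩ := exists_algHom_algebraicClosure_ne he
  obtain ⟨Ω, _, _, g₁, g₂, h⟩ := exists_field_amalgam hf hg
  have : CharZero Ω := charZero_of_injective_algebraMap (algebraMap k Ω).injective
  obtain ⟨M, _, _, _, _, _, i, σ, hi, hσ, hM⟩ :=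
    exists_differential_amalgam g₁ (g₂.comp (IsScalarTower.toAlgHom k E (AlgebraicClosure E)))
  refine ⟨M, ‹_›, ‹_›, ‹_›, ‹_›, ‹_›, i, σ, hi, hσ, fun hne ↦ hga (g₂.injective ?_)⟩
  have := hM (f a ⊗ₜ 1 - 1 ⊗ₜ f a) (by simp [hne])
  simp only [map_sub, Algebra.TensorProduct.productMap_apply_tmul, map_one, mul_one, one_mul,
    sub_eq_zero] at this
  exact (AlgHom.congr_fun h a).symm.trans this

end Amalgamation

/-! ### Tensor products over an algebraically closed field -/

section Points

theorem exists_fg_mem_baseChange_mem_baseChange {R A B : Type*} [CommRing R] [CommRing A]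
    [CommRing B] [Algebra R A] [Algebra R B] (x y : A ⊗[R] B) :
    ∃ S : Subalgebra R B, S.FG ∧ x ∈ S.baseChange A ∧ y ∈ S.baseChange A := by
  obtain ⟨S, hS, hx⟩ := exists_fg_and_mem_baseChange x
  obtain ⟨T, hT, hy⟩ := exists_fg_and_mem_baseChange y
  have mono {S' : Subalgebra R B} (h : S' ≤ S ⊔ T) : S'.baseChange A ≤ (S ⊔ T).baseChange A := by
    rintro _ ⟨z, rfl⟩
    refine ⟨Algebra.TensorProduct.map (.id A A) (Subalgebra.inclusion h) z, ?_⟩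
    induction z with
    | zero => simp
    | add s t hs ht => simpa using congrArg₂ (· + ·) hs ht
    | tmul a b => rfl
  exact ⟨S ⊔ T, hS.sup hT, mono le_sup_left hx, mono le_sup_right hy⟩

variable {C : Type*} [Field C]

theorem map_val_injective (E : Type*) {A : Type*} [Field E] [CommRing A] [Algebra C E] [Algebra C A]
    (S : Subalgebra C A) :
    Function.Injective (Algebra.TensorProduct.map (AlgHom.id E E) S.val) :=
  Module.Flat.lTensor_preserves_injective_linearMap S.val.toLinearMap Subtype.val_injective

theorem exists_algHom_apply_ne_zero [IsAlgClosed C] {A : Type*} [CommRing A] [IsDomain A]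
    [Algebra C A] [Algebra.FiniteType C A] {a : A} (ha : a ≠ 0) : ∃ s : A →ₐ[C] C, s a ≠ 0 := by
  let B := Localization.Away a
  have : Algebra.FiniteType A B := IsLocalization.finiteType_of_monoid_fg (Submonoid.powers a) B
  have : Algebra.FiniteType C B := .trans (S := A) ‹_› ‹_›
  have : Nontrivial B := (IsLocalization.injective B (M := Submonoid.powers a)
    (powers_le_nonZeroDivisors_of_noZeroDivisors ha)).nontrivial
  obtain ⟨m, hm⟩ := Ideal.exists_maximal B
  let _ := Ideal.Quotient.field m
  have := finite_of_finite_type_of_isJacobsonRing C (B ⧸ m)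
  let e : C ≃ₐ[C] B ⧸ m :=
    .ofBijective (Algebra.ofId C _) IsAlgClosed.algebraMap_bijective_of_isIntegral
  let q : B →ₐ[C] B ⧸ m := Ideal.Quotient.mkₐ C m
  have ha' : IsUnit (algebraMap A B a) := IsLocalization.Away.algebraMap_isUnit a
  exact ⟨(e.symm.toAlgHom.comp q).comp (IsScalarTower.toAlgHom C A B),
    ((ha'.map q).map e.symm).ne_zero⟩

variable {E A : Type*} [CommRing E] [CommRing A] [Algebra C E] [Algebra C A]

/-- Evaluation of a function on `Spec A` with coefficients in `E` at a `C`-valued point `s`. -/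
noncomputable def evalPoint (E : Type*) [CommRing E] [Algebra C E] (s : A →ₐ[C] C) :
    E ⊗[C] A →ₐ[E] E :=
  Algebra.TensorProduct.productLeftAlgHom (.id E E) ((Algebra.ofId C E).comp s)

@[simp]
theorem evalPoint_tmul (s : A →ₐ[C] C) (e : E) (a : A) :
    evalPoint E s (e ⊗ₜ a) = e * algebraMap C E (s a) := by
  simp [evalPoint, Algebra.ofId_apply]

theorem exists_forall_evalPoint_ne_zero {z : E ⊗[C] A} (hz : z ≠ 0) :
    ∃ a : A, a ≠ 0 ∧ ∀ s : A →ₐ[C] C, s a ≠ 0 → evalPoint E s z ≠ 0 := by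
  classical
  let b := Module.Basis.ofVectorSpace C E
  obtain ⟨i, hi⟩ := Finsupp.ne_iff.1
    ((LinearEquiv.map_ne_zero_iff (TensorProduct.equivFinsuppOfBasisLeft (N := A) b)).2 hz)
  refine ⟨_, hi, fun s hs h ↦ hs ?_⟩
  have key (z : E ⊗[C] A) : b.repr (evalPoint E s z) i =
      s (TensorProduct.equivFinsuppOfBasisLeft b z i) := by
    induction z with
    | zero => simp
    | tmul x y =>
      rw [evalPoint_tmul, TensorProduct.equivFinsuppOfBasisLeft_apply_tmul_apply, map_smul,
        mul_comm, ← Algebra.smul_def]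
      simp [mul_comm]
    | add x y hx hy => simp [hx, hy]
  rw [← key, h, map_zero, Finsupp.zero_apply]

theorem isDomain_tensorProduct [IsAlgClosed C] (E A : Type*) [Field E] [CommRing A] [IsDomain A]
    [Algebra C E] [Algebra C A] : IsDomain (E ⊗[C] A) := by
  have : NoZeroDivisors (E ⊗[C] A) := by
    refine ⟨fun {x y} hxy ↦ ?_⟩
    by_contra! hne
    obtain ⟨S, hS, ⟨x, rfl⟩, ⟨y, rfl⟩⟩ := exists_fg_mem_baseChange_mem_baseChange x y
    have := S.fg_iff_finiteType.1 hS
    obtain ⟨a, ha, hsa⟩ := exists_forall_evalPoint_ne_zero (ne_zero_of_map hne.1)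
    obtain ⟨b, hb, hsb⟩ := exists_forall_evalPoint_ne_zero (ne_zero_of_map hne.2)
    obtain ⟨s, hs⟩ := exists_algHom_apply_ne_zero (C := C) (mul_ne_zero ha hb)
    rw [map_mul] at hs
    have hxy : x * y = 0 := map_val_injective E S <| (map_mul _ x y).trans <| by
      rw [map_zero]; exact hxy
    have := mul_ne_zero (hsa s (left_ne_zero_of_mul hs)) (hsb s (right_ne_zero_of_mul hs))
    exact this (by rw [← map_mul, hxy, map_zero])
  exact NoZeroDivisors.to_isDomain _

end Points

section Units

variable {C E A O : Type*} [Field C] [Field E] [CommRing A] [Algebra C E] [Algebra C A]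
  [CommRing O] [Algebra C O] [Algebra O E] [IsFractionRing O E] [IsScalarTower C O E]

variable (A) in
theorem map_toAlgHom_injective : Function.Injective
    (Algebra.TensorProduct.map (IsScalarTower.toAlgHom O O E) (.id C A)) :=
  Module.Flat.rTensor_preserves_injective_linearMap (M := A)
    (IsScalarTower.toAlgHom C O E).toLinearMap (IsFractionRing.injective O E)

variable [IsDomain O] [ValuationRing O]

theorem exists_map_eq_smul {z : E ⊗[C] A} (hz : z ≠ 0) :
    ∃ (a : E) (p : O ⊗[C] A), a ≠ 0 ∧
      Algebra.TensorProduct.map (IsScalarTower.toAlgHom O O E) (.id C A) p = a • z ∧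
      Algebra.TensorProduct.map (IsScalarTower.toAlgHom O O (IsLocalRing.ResidueField O))
        (.id C A) p ≠ 0 := by
  let b := Module.Basis.ofVectorSpace C A
  let f := (b.baseChange E).repr z
  obtain ⟨j₀, hj₀, hmax⟩ := Finset.exists_max_image f.support
    (fun j ↦ ValuationRing.valuation O E (f j)) (Finsupp.support_nonempty_iff.2 (by simpa [f]))
  rw [Finsupp.mem_support_iff] at hj₀
  have hex (j) (hj : j ∈ f.support) : ∃ o : O, algebraMap O E o = (f j₀)⁻¹ * f j := by
    rw [← ValuationRing.mem_integer_iff, Valuation.mem_integer_iff, map_mul, map_inv₀, mul_comm,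
      ← div_eq_mul_inv]
    exact div_le_one_of_le₀ (hmax j hj) zero_le
  choose! o ho using hex
  have hsum : ∑ j ∈ f.support, f j • b.baseChange E j = z :=
    (b.baseChange E).linearCombination_repr z
  refine ⟨(f j₀)⁻¹, ∑ j ∈ f.support, o j ⊗ₜ b j, inv_ne_zero hj₀, ?_, fun h ↦ ?_⟩
  · conv_rhs => rw [← hsum]
    rw [map_sum, Finset.smul_sum]
    exact Finset.sum_congr rfl fun j hj ↦ by simp [ho j hj, TensorProduct.smul_tmul']
  · have hj₀' := Finsupp.mem_support_iff.2 hj₀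
    have ho₁ : o j₀ = 1 := IsFractionRing.injective O E (by
      rw [ho _ hj₀', inv_mul_cancel₀ hj₀, map_one])
    have := congrArg (fun w ↦ (b.baseChange (IsLocalRing.ResidueField O)).repr w j₀) h
    classical simp [Finsupp.finsetSum_apply, Finsupp.single_apply, ho₁, hj₀] at this

theorem exists_isUnit_map_eq_smul [IsAlgClosed C] [IsDomain A] {ε : E ⊗[C] A} (hε : IsUnit ε) :
    ∃ (a : E) (p : O ⊗[C] A), a ≠ 0 ∧ IsUnit p ∧
      Algebra.TensorProduct.map (IsScalarTower.toAlgHom O O E) (.id C A) p = a • ε := by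
  obtain ⟨ε', hε'⟩ := hε.exists_right_inv
  have := isDomain_tensorProduct (C := C) E A
  have := isDomain_tensorProduct (C := C) (IsLocalRing.ResidueField O) A
  obtain ⟨a, p, ha, hp, hpκ⟩ := exists_map_eq_smul (O := O) hε.ne_zero
  obtain ⟨a', p', ha', hp', hpκ'⟩ := exists_map_eq_smul (O := O) (right_ne_zero_of_mul_eq_one hε')
  have hinj := map_toAlgHom_injective (C := C) (E := E) (O := O) A
  set j := Algebra.TensorProduct.map (IsScalarTower.toAlgHom O O E) (.id C A)
  set κ := Algebra.TensorProduct.map (IsScalarTower.toAlgHom O O (IsLocalRing.ResidueField O))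
    (.id C A)
  have hpp : j (p * p') = (a * a') • 1 := by
    rw [map_mul, hp, hp', smul_mul_smul_comm, hε']
  have hκ : κ (p * p') ≠ 0 := by rw [map_mul]; exact mul_ne_zero hpκ hpκ'
  have isUnit_of_ne {o : O} (h : κ (o • 1) ≠ 0) : IsUnit o := by
    rw [← IsLocalRing.residue_ne_zero_iff_isUnit]
    refine fun h₀ ↦ h ?_
    rw [map_smul, map_one, ← algebraMap_smul (IsLocalRing.ResidueField O) o,
      IsLocalRing.ResidueField.algebraMap_eq, h₀, zero_smul]
  refine ⟨a, p, ha, isUnit_of_mul_isUnit_left (y := p') ?_, hp⟩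
  rcases ValuationRing.isInteger_or_isInteger O (a * a') with ⟨o, ho⟩ | ⟨o, ho⟩
  · have h : p * p' = o • 1 := hinj (by
      rw [hpp, map_smul, map_one, ← algebraMap_smul E o, ho])
    rw [h, ← Algebra.algebraMap_eq_smul_one]
    exact (isUnit_of_ne (h ▸ hκ)).map _
  · have h : o • (p * p') = 1 := hinj (by
      rw [map_smul, hpp, ← algebraMap_smul E o, ho, smul_smul,
        inv_mul_cancel₀ (mul_ne_zero ha ha'), one_smul, map_one])
    exact .of_mul_eq_one (o • 1) (by rw [mul_smul_comm, mul_one, h])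

theorem mem_range_algebraMap_of_forall_valuationSubring {C E : Type*} [Field C] [IsAlgClosed C]
    [Field E] [Algebra C E] {x : E}
    (hx : ∀ V : ValuationSubring E, (∀ c, algebraMap C E c ∈ V) → x ∈ V) :
    x ∈ (algebraMap C E).range := by
  by_cases hint : IsIntegral C x
  · exact hint.mem_range_algebraMap_of_minpoly_splits (IsAlgClosed.splits _)
  · let R := (integralClosure C E).toSubring
    have : IsIntegrallyClosedIn R E :=
      inferInstanceAs (IsIntegrallyClosedIn (integralClosure C E) E)
    obtain ⟨V, hRV, hV⟩ := R.exists_le_valuationSubring_of_isIntegrallyClosedIn hint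
    exact (hV (hx V fun c ↦ hRV (isIntegral_algebraMap (R := C)))).elim

theorem div_evalPoint_mem_range [IsAlgClosed C] [IsDomain A] {J : Type*} (b : Module.Basis J C A)
    {ε : E ⊗[C] A} (hε : IsUnit ε) (s : A →ₐ[C] C) (j : J) :
    (b.baseChange E).repr ε j / evalPoint E s ε ∈ (algebraMap C E).range := by
  refine mem_range_algebraMap_of_forall_valuationSubring fun V hV ↦ ?_
  let _ : Algebra C V := ((algebraMap C E).codRestrict V.toSubring hV).toAlgebra
  have : IsScalarTower C V E := .of_algebraMap_eq fun _ ↦ rfl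
  obtain ⟨a, p, ha, hp, h⟩ := exists_isUnit_map_eq_smul (O := V) hε
  have hcoord (z : V ⊗[C] A) : (b.baseChange E).repr
      (Algebra.TensorProduct.map (IsScalarTower.toAlgHom V V E) (.id C A) z) j =
        (b.baseChange V).repr z j := by
    induction z with
    | zero => simp
    | add x y hx hy => simp [hx, hy]
    | tmul x y => simp [Algebra.smul_def, IsScalarTower.algebraMap_apply C V E]
  have heval (z : V ⊗[C] A) : evalPoint E s
      (Algebra.TensorProduct.map (IsScalarTower.toAlgHom V V E) (.id C A) z) = evalPoint V s z := by
    induction z with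
    | zero => simp
    | add x y hx hy => simp [hx, hy]
    | tmul x y => simp [IsScalarTower.algebraMap_apply C V E]
  obtain ⟨v, hv⟩ := (hp.map (evalPoint V s)).exists_right_inv
  have hinv : (evalPoint V s p : E)⁻¹ = v := inv_eq_of_mul_eq_one_right (by exact_mod_cast hv)
  rw [← mul_div_mul_left _ _ ha, ← smul_eq_mul, ← smul_eq_mul, ← Finsupp.smul_apply, ← map_smul,
    ← map_smul, ← h, heval, hcoord, div_eq_mul_inv, hinv]
  exact V.mul_mem _ _ (Subtype.prop _) v.2

theorem exists_eq_tmul_of_isUnit [IsAlgClosed C] [IsDomain A] {ε : E ⊗[C] A} (hε : IsUnit ε) :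
    ∃ (e : E) (a : A), ε = e ⊗ₜ a := by
  wlog hA : Algebra.FiniteType C A generalizing A
  · obtain ⟨ε', h⟩ := hε.exists_right_inv
    obtain ⟨S, hS, ⟨x, rfl⟩, ⟨y, rfl⟩⟩ := exists_fg_mem_baseChange_mem_baseChange ε ε'
    have hxy : x * y = 1 := map_val_injective E S ((map_mul ..).trans (h.trans (map_one _).symm))
    obtain ⟨e, a, rfl⟩ := this (.of_mul_eq_one y hxy) (S.fg_iff_finiteType.1 hS)
    exact ⟨e, a, rfl⟩
  obtain ⟨s, -⟩ := exists_algHom_apply_ne_zero (C := C) (one_ne_zero (α := A))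
  have hs : evalPoint E s ε ≠ 0 := (hε.map (evalPoint E s)).ne_zero
  let b := Module.Basis.ofVectorSpace C A
  let f := (b.baseChange E).repr ε
  have hsum : ∑ j ∈ f.support, f j • b.baseChange E j = ε :=
    (b.baseChange E).linearCombination_repr ε
  choose c hc using div_evalPoint_mem_range b hε s
  refine ⟨evalPoint E s ε, ∑ j ∈ f.support, c j • b j, ?_⟩
  conv_lhs => rw [← hsum]
  rw [TensorProduct.tmul_sum]
  refine Finset.sum_congr rfl fun j _ ↦ ?_
  rw [← TensorProduct.smul_tmul, Algebra.smul_def (c j), hc, div_mul_cancel₀ _ hs,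
    Module.Basis.baseChange_apply, TensorProduct.smul_tmul', smul_eq_mul, mul_one]

end Units

/-! ### Linear disjointness of constants -/

section TensorMap

variable {C E A M Ω : Type*} (F : Type*) [Field C] [Field F] [CommRing E] [CommRing A] [CommRing M]
  [CommRing Ω] [Algebra C F] [Algebra C E] [Algebra C A] [Algebra C M] [Algebra F M] [Algebra C Ω]
  [Algebra F Ω] [IsScalarTower C F M] [IsScalarTower C F Ω]

/-- The homomorphism `e ⊗ a ↦ f e ⊗ u a` from a tensor product over `C` to a tensor product over
an extension `F` of `C`. -/
noncomputable def tensorMap (f : E →ₐ[C] M) (u : A →ₐ[C] Ω) : E ⊗[C] A →ₐ[C] M ⊗[F] Ω :=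
  Algebra.TensorProduct.productMap
    ((Algebra.TensorProduct.includeLeft : M →ₐ[C] M ⊗[F] Ω).comp f)
    (((Algebra.TensorProduct.includeRight : Ω →ₐ[F] M ⊗[F] Ω).restrictScalars C).comp u)

@[simp]
theorem tensorMap_tmul (f : E →ₐ[C] M) (u : A →ₐ[C] Ω) (e : E) (a : A) :
    tensorMap F f u (e ⊗ₜ a) = f e ⊗ₜ u a := by
  simp [tensorMap]

theorem productMap_tensorMap {L : Type*} [CommRing L] [Algebra C L] [Algebra F L]
    [IsScalarTower C F L] (f : E →ₐ[C] M) (u : A →ₐ[C] Ω) (p : M →ₐ[F] L) (q : Ω →ₐ[F] L)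
    (z : E ⊗[C] A) : Algebra.TensorProduct.productMap p q (tensorMap F f u z) =
      Algebra.TensorProduct.productMap ((p.restrictScalars C).comp f)
        ((q.restrictScalars C).comp u) z := by
  induction z with
  | zero => simp only [map_zero]
  | add x y hx hy => simp only [map_add, hx, hy]
  | tmul e a => simp

theorem map_tensorMap {Q Ω₀ : Type*} [CommRing Q] [CommRing Ω₀] [Algebra C Q] [Algebra C Ω₀]
    [Algebra F Ω₀] [IsScalarTower C F Ω₀] {a : A →ₐ[C] Ω₀} {j : Ω₀ →ₐ[F] Ω} {u : Q →ₐ[C] Ω}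
    {ν : A →ₐ[C] Q} (h : (j.restrictScalars C).comp a = u.comp ν) (f : E →ₐ[C] M) (z : E ⊗[C] A) :
    Algebra.TensorProduct.map (.id F M) j (tensorMap F f a z) =
      tensorMap F f u (Algebra.TensorProduct.map (.id C E) ν z) := by
  induction z with
  | zero => simp only [map_zero]
  | add x y hx hy => simp only [map_add, hx, hy]
  | tmul e x =>
    have hx : j (a x) = u (ν x) := DFunLike.congr_fun h x
    simp [hx]

theorem tensorMap_eq_cancelBaseChange (f : E →ₐ[C] M) (u : A →ₐ[C] Ω) (z : E ⊗[C] A) :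
    tensorMap F f u z = Algebra.TensorProduct.map (.id F M)
      (Algebra.TensorProduct.productLeftAlgHom (Algebra.ofId F Ω) u)
      ((Algebra.TensorProduct.cancelBaseChange C F F M A).symm
        (Algebra.TensorProduct.map f (.id C A) z)) := by
  induction z with
  | zero => simp only [map_zero]
  | add x y hx hy => simp only [map_add, hx, hy]
  | tmul e a => simp

theorem tensorMap_eq_comm (f : E →ₐ[C] M) (u : A →ₐ[C] Ω) (z : E ⊗[C] A) :
    tensorMap F f u z = Algebra.TensorProduct.comm F Ω M (tensorMap F u f
      (Algebra.TensorProduct.comm C E A z)) := by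
  induction z with
  | zero => simp only [map_zero]
  | add x y hx hy => simp only [map_add, hx, hy]
  | tmul e a => simp

theorem tensorMap_injective {f : E →ₐ[C] M} {u : A →ₐ[C] Ω} (hf : Function.Injective
      (Algebra.TensorProduct.productLeftAlgHom (Algebra.ofId F M) f : F ⊗[C] E →ₐ[F] M))
    (hu : Function.Injective u) : Function.Injective (tensorMap F f u) := by
  have h : Function.Injective (tensorMap F u f) := by
    simp only [Function.Injective, tensorMap_eq_cancelBaseChange]
    exact fun x y h ↦ Module.Flat.rTensor_preserves_injective_linearMap (M := E) u.toLinearMap hu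
      ((AlgEquiv.injective _) (Module.Flat.lTensor_preserves_injective_linearMap (M := Ω)
        (Algebra.TensorProduct.productLeftAlgHom (Algebra.ofId F M) f).toLinearMap hf h))
  intro x y hxy
  rw [tensorMap_eq_comm F f u x, tensorMap_eq_comm F f u y] at hxy
  exact (AlgEquiv.injective _) (h ((AlgEquiv.injective _) hxy))

theorem productMap_injective {f : E →ₐ[C] M} (hf : Function.Injective
      (Algebra.TensorProduct.productLeftAlgHom (Algebra.ofId F M) f : F ⊗[C] E →ₐ[F] M)) :
    Function.Injective (Algebra.TensorProduct.productMap f (IsScalarTower.toAlgHom C F M)) := by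
  have h (z : E ⊗[C] F) :
      Algebra.TensorProduct.productMap f (IsScalarTower.toAlgHom C F M) z =
        Algebra.TensorProduct.productLeftAlgHom (Algebra.ofId F M) f
          (Algebra.TensorProduct.comm C E F z) := by
    induction z with
    | zero => simp only [map_zero]
    | add x y hx hy => simp only [map_add, hx, hy]
    | tmul e c => simp [Algebra.ofId_apply, mul_comm]
  intro x y hxy
  exact (Algebra.TensorProduct.comm C E F).injective (hf ((h x).symm.trans (hxy.trans (h y))))

theorem flat_of_injective {R L : Type*} [CommRing R] [IsDomain R] [Field L] {f : R →+* L}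
    (hf : Function.Injective f) : f.Flat := by
  have h : (IsFractionRing.lift hf).comp (algebraMap R (FractionRing R)) = f :=
    RingHom.ext (IsFractionRing.lift_algebraMap hf)
  rw [← h]
  refine .comp ?_ (.of_isField (Field.toIsField _) _)
  rw [RingHom.flat_algebraMap_iff]
  exact IsLocalization.flat _ (nonZeroDivisors R)

end TensorMap

section Field

variable {C E A M Ω : Type*} (F : Type*) [Field C] [Field F] [Field E] [CommRing A] [Field M]
  [Field Ω] [Algebra C F] [Algebra C E] [Algebra C A] [Algebra C M] [Algebra F M] [Algebra C Ω]
  [Algebra F Ω] [IsScalarTower C F M] [IsScalarTower C F Ω]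

theorem tensorMap_flat [IsDomain (F ⊗[C] A)] (f : E →ₐ[C] M) {u : A →ₐ[C] Ω}
    (hu : Function.Injective
      (Algebra.TensorProduct.productLeftAlgHom (Algebra.ofId F Ω) u : F ⊗[C] A →ₐ[F] Ω)) :
    (tensorMap F f u : E ⊗[C] A →+* M ⊗[F] Ω).Flat := by
  have h : ((Algebra.TensorProduct.map (.id F M)
      (Algebra.TensorProduct.productLeftAlgHom (Algebra.ofId F Ω) u)).toRingHom.comp
      ((Algebra.TensorProduct.cancelBaseChange C F F M A).symm.toRingEquiv.toRingHom.comp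
        (Algebra.TensorProduct.map f (.id C A)).toRingHom)) = tensorMap F f u :=
    RingHom.ext fun z ↦ (tensorMap_eq_cancelBaseChange F f u z).symm
  rw [← h]
  refine .comp (.comp ?_ (.of_bijective (RingEquiv.bijective _))) ?_
  · exact .tensorProductMap (.of_isField (Field.toIsField E) _)
      (.of_bijective Function.bijective_id)
  · exact .tensorProductMap (.of_bijective Function.bijective_id) (flat_of_injective hu)

variable [Differential E] [Differential M] [Differential.ContainConstants C E]

theorem productLeftAlgHom_injective (hF : ∀ c : F, (algebraMap F M c)′ = 0) {f : E →ₐ[C] M}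
    (hf : IsDifferentialHom (f : E →+* M)) : Function.Injective
      (Algebra.TensorProduct.productLeftAlgHom (Algebra.ofId F M) f : F ⊗[C] E →ₐ[F] M) := by
  let b := Module.Basis.ofVectorSpace C E
  have hli : LinearIndependent F (f ∘ b) := linearIndependent_comp hF hf b.linearIndependent
  have h : (Algebra.TensorProduct.productLeftAlgHom (Algebra.ofId F M) f).toLinearMap =
      Finsupp.linearCombination F (f ∘ b) ∘ₗ (b.baseChange F).repr :=
    (b.baseChange F).ext fun i ↦ by
      rw [LinearMap.comp_apply, LinearEquiv.coe_coe, Module.Basis.repr_self]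
      simp
  exact (congrArg DFunLike.coe h).symm ▸
    (linearIndependent_iff_injective_finsuppLinearCombination.1 hli).comp
      (b.baseChange F).repr.injective

end Field

/-! ### Coefficient spaces -/

section Contract

variable {C E Q : Type*} [Field C] [AddCommGroup E] [Module C E] [AddCommGroup Q] [Module C Q]

/-- The contraction of an element of `E ⊗ Q` with a linear functional on `Q`. -/
noncomputable def contract : E ⊗[C] Q →ₗ[C] Module.Dual C Q →ₗ[C] E :=
  (LinearMap.lTensorHom E).flip.compr₂ (TensorProduct.rid C E).toLinearMap

@[simp]
theorem contract_tmul (e : E) (q : Q) (l : Module.Dual C Q) : contract (e ⊗ₜ q) l = l q • e := by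
  simp [contract]

/-- The smallest subspace `T` of `E` such that `z` lies in the image of `T ⊗ Q`. -/
noncomputable def coeffSpace (z : E ⊗[C] Q) : Submodule C E := LinearMap.range (contract z)

theorem exists_sum_contract_tmul_eq {ι : Type*} (b : Module.Basis ι C Q) (z : E ⊗[C] Q) :
    ∃ s : Finset ι, ∑ i ∈ s, contract z (b.coord i) ⊗ₜ b i = z := by
  classical
  let f := TensorProduct.equivFinsuppOfBasisRight (M := E) b z
  have hf (i) : f i = contract z (b.coord i) := by
    simp only [f]
    induction z with
    | zero => simp
    | add x y hx hy => simp [hx, hy]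
    | tmul e q => simp
  refine ⟨f.support, ?_⟩
  simp only [← hf]
  exact (TensorProduct.equivFinsuppOfBasisRight_symm_apply b f).symm.trans
    (LinearEquiv.symm_apply_apply _ z)

theorem exists_contract_ne_zero {z : E ⊗[C] Q} (hz : z ≠ 0) : ∃ l, contract z l ≠ 0 := by
  by_contra! h
  obtain ⟨s, hs⟩ := exists_sum_contract_tmul_eq (Module.Basis.ofVectorSpace C Q) z
  exact hz (hs.symm.trans (by simp [h]))

instance finite_coeffSpace (z : E ⊗[C] Q) : Module.Finite C (coeffSpace z) := by
  let b := Module.Basis.ofVectorSpace C Q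
  obtain ⟨s, hs⟩ := exists_sum_contract_tmul_eq b z
  have hle : coeffSpace z ≤ Submodule.span C ((fun i ↦ contract z (b.coord i)) '' s) := by
    rintro _ ⟨l, rfl⟩
    have h := congrArg (contract · l) hs
    simp only [map_sum, LinearMap.sum_apply, contract_tmul] at h
    rw [← h]
    exact Submodule.sum_mem _ fun i hi ↦
      Submodule.smul_mem _ _ (Submodule.subset_span ⟨i, hi, rfl⟩)
  have := FiniteDimensional.span_of_finite C (s.finite_toSet.image fun i ↦ contract z (b.coord i))
  exact Submodule.finiteDimensional_of_le hle

end Contract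

section Field

variable {C E Q M Ω F : Type*} [Field C] [CommRing E] [CommRing Q] [Field F] [CommRing M]
  [CommRing Ω] [Algebra C E] [Algebra C Q] [Algebra C F] [Algebra C M] [Algebra F M] [Algebra C Ω]
  [Algebra F Ω] [IsScalarTower C F M] [IsScalarTower C F Ω]

theorem contract_tmul_mul (m : M) (ω : Ω) (w : M ⊗[F] Ω) (l : Module.Dual F Ω) :
    contract ((m ⊗ₜ ω) * w) l = m * contract w (l ∘ₗ LinearMap.mulLeft F ω) := by
  induction w with
  | zero => simp
  | add x y hx hy => simp only [mul_add, map_add, LinearMap.add_apply, hx, hy]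
  | tmul a b => simp

theorem contract_tensorMap_mem (f : E →ₐ[C] M) (u : Q →ₐ[C] Ω) (z : E ⊗[C] Q)
    (l : Module.Dual F Ω) :
    contract (tensorMap F f u z) l ∈ Submodule.span F (f '' coeffSpace z) := by
  obtain ⟨s, hs⟩ := exists_sum_contract_tmul_eq (Module.Basis.ofVectorSpace C Q) z
  have h := congrArg (fun w ↦ contract (tensorMap F f u w) l) hs
  simp only [map_sum, tensorMap_tmul, LinearMap.sum_apply, contract_tmul] at h
  rw [← h]
  exact Submodule.sum_mem _ fun i _ ↦ Submodule.smul_mem _ _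
    (Submodule.subset_span ⟨_, ⟨_, rfl⟩, rfl⟩)

theorem exists_contract_tensorMap_eq (f : E →ₐ[C] M) {u : Q →ₐ[C] Ω} (hu : Function.Injective
      (Algebra.TensorProduct.productLeftAlgHom (Algebra.ofId F Ω) u : F ⊗[C] Q →ₐ[F] Ω))
    {z : E ⊗[C] Q} {t : E} (ht : t ∈ coeffSpace z) :
    ∃ l : Module.Dual F Ω, contract (tensorMap F f u z) l = f t := by
  obtain ⟨l, rfl⟩ := ht
  obtain ⟨g, hg⟩ := LinearMap.exists_leftInverse_of_injective
    (Algebra.TensorProduct.productLeftAlgHom (Algebra.ofId F Ω) u).toLinearMap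
    (LinearMap.ker_eq_bot.2 hu)
  have hgu (q : Q) : g (u q) = 1 ⊗ₜ q := by simpa using LinearMap.congr_fun hg (1 ⊗ₜ q)
  refine ⟨Module.Dual.baseChange F l ∘ₗ g, ?_⟩
  induction z with
  | zero => simp
  | add x y hx hy => simp only [map_add, LinearMap.add_apply, hx, hy]
  | tmul e q => simp [hgu]

end Field

section Coprime

-- This form of coprimality of `α` and `β`, unlike `IsRelPrime`, survives flat base change.
theorem dvd_algebraMap_of_flat {R S : Type*} [CommRing R] [CommRing S] [Algebra R S]
    [Module.Flat R S] {α β : R} (h : ∀ z, β ∣ α * z → β ∣ z) {z : S}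
    (hz : algebraMap R S β ∣ algebraMap R S α * z) : algebraMap R S β ∣ z := by
  obtain ⟨w, hw⟩ := hz
  obtain ⟨n, a, y, hzy, hay⟩ := Module.Flat.isTrivialRelation_of_sum_smul_eq_zero (R := R)
    (f := ![α, -β]) (x := ![z, w]) (by simp [Fin.sum_univ_two, Algebra.smul_def, hw])
  have hz : z = ∑ j, a 0 j • y j := hzy 0
  rw [hz]
  refine Finset.dvd_sum fun j _ ↦ ?_
  have hj := hay j
  simp only [Fin.sum_univ_two, Matrix.cons_val_zero, Matrix.cons_val_one] at hj
  rw [Algebra.smul_def]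
  exact (map_dvd _ (h _ ⟨a 1 j, by linear_combination hj⟩)).mul_right _

theorem dvd_map_of_flat {R S : Type*} [CommRing R] [CommRing S] {f : R →+* S} (hf : f.Flat)
    {α β : R} (h : ∀ z, β ∣ α * z → β ∣ z) {z : S} (hz : f β ∣ f α * z) : f β ∣ z := by
  let _ := f.toAlgebra
  have : Module.Flat R S := hf
  exact dvd_algebraMap_of_flat h hz

theorem exists_mul_eq_mul_eq_coprime {R : Type*} [CommRing R] [UniqueFactorizationMonoid R] (a : R)
    {b : R} (hb : b ≠ 0) :
    ∃ g α β : R, g ≠ 0 ∧ a = g * α ∧ b = g * β ∧ ∀ z, β ∣ α * z → β ∣ z := by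
  obtain ⟨β, α, g, hrel, rfl, rfl⟩ := UniqueFactorizationMonoid.exists_reduced_factors b hb a
  exact ⟨g, α, β, left_ne_zero_of_mul hb, rfl, rfl, fun z ↦ hrel.dvd_of_dvd_mul_left⟩

theorem uniqueFactorizationMonoid_tensorProduct (C E σ : Type*) [Field C] [Field E] [Algebra C E] :
    UniqueFactorizationMonoid (E ⊗[C] FractionRing (MvPolynomial σ C)) := by
  let A := MvPolynomial σ C
  let _ : Algebra (E ⊗[C] A) (E ⊗[C] FractionRing A) :=
    (Algebra.TensorProduct.map (.id E E) (IsScalarTower.toAlgHom C A (FractionRing A))).toAlgebra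
  have : IsScalarTower E (E ⊗[C] A) (E ⊗[C] FractionRing A) :=
    ⟨fun e x y ↦ by
      simp only [Algebra.smul_def x, Algebra.smul_def (e • x), RingHom.algebraMap_toAlgebra,
        AlgHom.toRingHom_eq_coe, RingHom.coe_coe, map_smul, smul_mul_assoc]⟩
  have := IsLocalization.tensorProduct_tensorProduct_right C E (nonZeroDivisors A) (FractionRing A)
    (by ext <;> simp [RingHom.algebraMap_toAlgebra])
  have : UniqueFactorizationMonoid (E ⊗[C] A) :=
    (MvPolynomial.algebraTensorAlgEquiv C E).symm.toMulEquiv.uniqueFactorizationMonoid inferInstance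
  exact .of_isLocalization ((nonZeroDivisors A).map
    (Algebra.TensorProduct.includeRight : A →ₐ[C] E ⊗[C] A)) _

variable {C E Q M Ω F : Type*} [Field C] [Field E] [CommRing Q] [Field F] [Field M]
  [Field Ω] [Algebra C E] [Algebra C Q] [Algebra C F] [Algebra C M] [Algebra F M] [Algebra C Ω]
  [Algebra F Ω] [IsScalarTower C F M] [IsScalarTower C F Ω]

theorem exists_mem_span_mul_eq {f : E →ₐ[C] M} {u : Q →ₐ[C] Ω} {α β : E ⊗[C] Q}
    (hβ : tensorMap F f u β ≠ 0) {x : M}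
    (h : x ⊗ₜ 1 * tensorMap F f u β = tensorMap F f u α) :
    ∃ a ∈ Submodule.span F (f '' coeffSpace α), ∃ b ∈ Submodule.span F (f '' coeffSpace β),
      b ≠ 0 ∧ x * b = a := by
  obtain ⟨l, hl⟩ := exists_contract_ne_zero hβ
  refine ⟨_, contract_tensorMap_mem f u α l, _, contract_tensorMap_mem f u β l, hl, ?_⟩
  rw [← h, contract_tmul_mul, LinearMap.mulLeft_one, LinearMap.comp_id]

theorem exists_mem_span_eq_mul {i σ : E →ₐ[C] M} {u v : Q →ₐ[C] Ω} (hv : Function.Injective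
      (Algebra.TensorProduct.productLeftAlgHom (Algebra.ofId F Ω) v : F ⊗[C] Q →ₐ[F] Ω))
    {z : E ⊗[C] Q} {m : M} {ω : Ω} (h : tensorMap F σ v z = m ⊗ₜ ω * tensorMap F i u z) {t : E}
    (ht : t ∈ coeffSpace z) : ∃ w ∈ Submodule.span F (i '' coeffSpace z), σ t = m * w := by
  obtain ⟨l, hl⟩ := exists_contract_tensorMap_eq (F := F) σ hv ht
  refine ⟨_, contract_tensorMap_mem i u z (l ∘ₗ LinearMap.mulLeft F ω), ?_⟩
  rw [← hl, h, contract_tmul_mul]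

theorem exists_forall_mem_coeffSpace_eq_mul [IsAlgClosed F] [IsDomain (F ⊗[C] Q)]
    {i σ : E →ₐ[C] M} {u v : Q →ₐ[C] Ω}
    (hu : Function.Injective
      (Algebra.TensorProduct.productLeftAlgHom (Algebra.ofId F Ω) u : F ⊗[C] Q →ₐ[F] Ω))
    (hv : Function.Injective
      (Algebra.TensorProduct.productLeftAlgHom (Algebra.ofId F Ω) v : F ⊗[C] Q →ₐ[F] Ω))
    {α β : E ⊗[C] Q} (hβu : tensorMap F i u β ≠ 0) (hβv : tensorMap F σ v β ≠ 0)
    (hαβ : ∀ z, β ∣ α * z → β ∣ z)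
    (h : tensorMap F i u α * tensorMap F σ v β = tensorMap F i u β * tensorMap F σ v α) :
    ∃ m : M, m ≠ 0 ∧ ∀ t ∈ coeffSpace α ⊔ coeffSpace β,
      ∃ w ∈ Submodule.span F (i '' (coeffSpace α ⊔ coeffSpace β : Submodule C E)),
        σ t = m * w := by
  have := isDomain_tensorProduct (C := F) M Ω
  obtain ⟨ε, hε⟩ := dvd_map_of_flat (tensorMap_flat F i hu) hαβ ⟨_, h⟩
  have hdvd : tensorMap F σ v β ∣ tensorMap F i u β :=
    dvd_map_of_flat (tensorMap_flat F σ hv) hαβ ⟨_, show tensorMap F σ v α * tensorMap F i u β =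
      tensorMap F σ v β * tensorMap F i u α by linear_combination -h⟩
  replace hε : tensorMap F σ v β = tensorMap F i u β * ε := hε
  have hunit : IsUnit ε := by
    obtain ⟨δ, hδ⟩ := hdvd
    refine .of_mul_eq_one δ (mul_left_cancel₀ hβu ?_)
    rw [← mul_assoc, ← hε, ← hδ, mul_one]
  obtain ⟨m, ω, rfl⟩ := exists_eq_tmul_of_isUnit hunit
  have hβ : tensorMap F σ v β = m ⊗ₜ ω * tensorMap F i u β := by rw [hε, mul_comm]
  have hα : tensorMap F σ v α = m ⊗ₜ ω * tensorMap F i u α :=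
    mul_left_cancel₀ hβu (by rw [← h, hβ]; ring)
  refine ⟨m, by rintro rfl; exact hβv (by simp [hε]), fun t ht ↦ ?_⟩
  obtain ⟨a, ha, b, hb, rfl⟩ := Submodule.mem_sup.1 ht
  obtain ⟨x, hx, hax⟩ := exists_mem_span_eq_mul hv hα ha
  obtain ⟨y, hy, hby⟩ := exists_mem_span_eq_mul hv hβ hb
  refine ⟨x + y, add_mem ?_ ?_, by rw [map_add, hax, hby, mul_add]⟩
  · exact Submodule.span_mono (Set.image_mono (SetLike.coe_subset_coe.2 le_sup_left)) hx
  · exact Submodule.span_mono (Set.image_mono (SetLike.coe_subset_coe.2 le_sup_right)) hy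

end Coprime

/-! ### Descent of rationality -/

theorem exists_ne_zero_forall_exists_comap_eq {D B : Type*} [CommRing D] [IsDomain D]
    [IsNoetherianRing D] [CommRing B] {f : D →+* B} (hf : Function.Injective f)
    (hft : f.FiniteType) : ∃ h : D, h ≠ 0 ∧
      ∀ p : Ideal D, p.IsPrime → h ∉ p → ∃ q : Ideal B, q.IsPrime ∧ q.comap f = p := by
  obtain ⟨S, hS⟩ := PrimeSpectrum.exists_constructibleSetData_iff.2
    (PrimeSpectrum.isConstructible_range_comap (RingHom.FinitePresentation.of_finiteType.1 hft))
  obtain ⟨q₀, hq₀, hq⟩ := Ideal.exists_comap_eq_of_mem_minimalPrimes_of_injective hf ⊥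
    (by rw [IsDomain.minimalPrimes_eq_singleton_bot]; rfl)
  have hbot : (⊥ : PrimeSpectrum D) ∈ S.toSet := by
    rw [hS]
    exact ⟨⟨q₀, hq₀⟩, PrimeSpectrum.ext hq⟩
  obtain ⟨T, hT, hgen, hf₀⟩ := Set.mem_iUnion₂.1 hbot
  refine ⟨T.f, by simpa using hf₀, fun p hp hfp ↦ ?_⟩
  have hp' : (⟨p, hp⟩ : PrimeSpectrum D) ∈ S.toSet := by
    refine Set.mem_iUnion₂.2 ⟨T, hT, ?_, by simpa using hfp⟩
    exact (PrimeSpectrum.mem_zeroLocus _ _).2 fun x hx ↦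
      (Ideal.mem_bot.1 ((PrimeSpectrum.mem_zeroLocus _ _).1 hgen hx)).symm ▸ p.zero_mem
  rw [hS] at hp'
  obtain ⟨q, hq⟩ := hp'
  exact ⟨q.asIdeal, q.isPrime, congrArg PrimeSpectrum.asIdeal hq⟩

theorem exists_fg_finset_forall_exists_rename_eq {C E ι : Type*} [CommRing C] [CommRing E]
    [Algebra C E]
    (t : Finset (MvPolynomial ι E)) : ∃ (R : Subalgebra C E) (s : Finset ι), R.FG ∧
      ∀ p ∈ t, ∃ q : MvPolynomial s R,
        MvPolynomial.rename (↑) (MvPolynomial.mapAlgHom R.val q) = p := by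
  classical
  let R := Algebra.adjoin C (t.biUnion MvPolynomial.coeffs : Set E)
  refine ⟨R, t.biUnion MvPolynomial.vars, Subalgebra.fg_adjoin_finset _, fun p hp ↦ ?_⟩
  obtain ⟨p', rfl⟩ : p ∈ Set.range (MvPolynomial.map (R.val : R →+* E)) :=
    MvPolynomial.mem_range_map_iff_coeffs_subset.2 fun c hc ↦
      ⟨⟨c, Algebra.subset_adjoin (Finset.mem_coe.2 (Finset.mem_biUnion.2 ⟨p, hp, hc⟩))⟩, rfl⟩
  obtain ⟨q, rfl⟩ := MvPolynomial.exists_rename_eq_of_vars_subset_range p'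
    ((↑) : t.biUnion MvPolynomial.vars → ι) Subtype.val_injective fun i hi ↦ by
      rw [Subtype.range_coe]
      refine Finset.mem_coe.2 (Finset.mem_biUnion.2 ⟨_, hp, ?_⟩)
      rwa [MvPolynomial.vars_map_of_injective p' Subtype.val_injective]
  exact ⟨q, (MvPolynomial.map_rename _ _ q).symm⟩

theorem exists_comp_eq_of_forall_mem_range {C A B L : Type*} [CommRing C] [CommRing A] [CommRing B]
    [CommRing L] [Algebra C A] [Algebra C B] [Algebra C L] {a : Set A} (ha : Algebra.adjoin C a = ⊤)
    (θ : A →ₐ[C] L) {j : B →ₐ[C] L} (hj : Function.Injective j) (h : ∀ x ∈ a, θ x ∈ j.range) :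
    ∃ θ' : A →ₐ[C] B, j.comp θ' = θ := by
  have hle : θ.range ≤ j.range := by
    rw [← Algebra.map_top, ← ha, AlgHom.map_adjoin, Algebra.adjoin_le_iff]
    rintro _ ⟨x, hx, rfl⟩
    exact h x hx
  refine ⟨(AlgEquiv.ofInjective j hj).symm.toAlgHom.comp
    (θ.codRestrict j.range fun x ↦ hle ⟨x, rfl⟩), AlgHom.ext fun x ↦ ?_⟩
  exact congrArg Subtype.val ((AlgEquiv.ofInjective j hj).apply_symm_apply _)

theorem exists_injective_localizationAway {C P L : Type*} [CommRing C] [CommRing P] [Field L]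
    [Algebra C P] [Algebra C L] {f : P →ₐ[C] L} (hf : Function.Injective f) {g : P} (hg : g ≠ 0) :
    ∃ j : Localization.Away g →ₐ[C] L, Function.Injective j ∧
      ∀ p, j (algebraMap P (Localization.Away g) p) = f p := by
  have hunit (s : Submonoid.powers g) : IsUnit (f s) := by
    obtain ⟨_, k, rfl⟩ := s
    rw [map_pow]
    exact (IsUnit.mk0 _ ((map_ne_zero_iff f hf).2 hg)).pow k
  let j : Localization.Away g →ₐ[C] L := IsLocalization.liftAlgHom (f := f) hunit
  have hj (p : P) : j (algebraMap _ _ p) = f p := IsLocalization.lift_eq _ p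
  refine ⟨j, (injective_iff_map_eq_zero j).2 fun x hx ↦ ?_, hj⟩
  obtain ⟨⟨n, s⟩, hns⟩ := IsLocalization.surj (Submonoid.powers g) x
  have hn : f n = 0 := by rw [← hj, ← hns, map_mul, hx, zero_mul]
  rw [(map_eq_zero_iff f hf).1 hn, map_zero] at hns
  exact ((IsLocalization.map_units _ s).mul_left_eq_zero).1 hns

variable {C : Type*} [Field C] [IsAlgClosed C]

theorem exists_algHom_evalPoint_ne_zero {A R : Type*} [CommRing A] [Algebra C A] [CommRing R]
    [IsDomain R] [Algebra C R] [Algebra.FiniteType C R] {z : A ⊗[C] R} (hz : z ≠ 0) :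
    ∃ r : R →ₐ[C] C, evalPoint A r z ≠ 0 := by
  obtain ⟨a, ha, h⟩ := exists_forall_evalPoint_ne_zero hz
  obtain ⟨r, hr⟩ := exists_algHom_apply_ne_zero (C := C) ha
  exact ⟨r, h r hr⟩

variable {A R : Type*} [CommRing A] [IsDomain A] [Algebra C A] [Algebra.FiniteType C A] [CommRing R]
  [IsDomain R] [Algebra C R] [Algebra.FiniteType C R]

theorem exists_specialization {B : Type*} [CommRing B] [IsDomain B] [Algebra C B]
    [Algebra.FiniteType C B] {f : A ⊗[C] R →ₐ[C] B} (hf : Function.Injective f) :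
    ∃ (r : R →ₐ[C] C) (q : Ideal B), q.IsPrime ∧ q.comap f = RingHom.ker (evalPoint A r) := by
  have : IsDomain (A ⊗[C] R) := hf.isDomain f.toRingHom
  have : Algebra.FiniteType C (A ⊗[C] R) := .trans (S := A) ‹_› inferInstance
  have : IsNoetherianRing (A ⊗[C] R) := Algebra.FiniteType.isNoetherianRing C _
  obtain ⟨h, h0, hq⟩ := exists_ne_zero_forall_exists_comap_eq (f := f.toRingHom) hf
    (.of_comp_finiteType (f := algebraMap C (A ⊗[C] R)) (by
      rw [AlgHom.toRingHom_eq_coe, AlgHom.comp_algebraMap, RingHom.finiteType_algebraMap]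
      infer_instance))
  obtain ⟨r, hr⟩ := exists_algHom_evalPoint_ne_zero h0
  exact ⟨r, hq _ (RingHom.ker_isPrime _) hr⟩

theorem exists_injective_of_localization {σ : Type*} [Finite σ] {g : MvPolynomial σ R} (hg : g ≠ 0)
    {θ : A →ₐ[C] Localization.Away g} (hθ : Function.Injective (Algebra.TensorProduct.productMap θ
      (IsScalarTower.toAlgHom C R (Localization.Away g)))) :
    ∃ ν : A →ₐ[C] FractionRing (MvPolynomial σ C), Function.Injective ν := by
  let P := MvPolynomial σ R
  let B := Localization.Away g
  have : IsDomain B := IsLocalization.isDomain_localization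
    (powers_le_nonZeroDivisors_of_noZeroDivisors hg)
  have : Algebra.FiniteType C P := .trans (S := R) ‹_› inferInstance
  have : Algebra.FiniteType P B := IsLocalization.finiteType_of_monoid_fg (Submonoid.powers g) B
  have : Algebra.FiniteType C B := .trans (S := P) ‹_› ‹_›
  obtain ⟨r, q, hq, hqr⟩ := exists_specialization hθ
  have hqr_iff (z : A ⊗[C] R) :
      Algebra.TensorProduct.productMap θ (IsScalarTower.toAlgHom C R B) z ∈ q ↔
        evalPoint A r z = 0 := SetLike.ext_iff.1 hqr z
  let ψ : P →ₐ[C] FractionRing (MvPolynomial σ C) :=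
    (IsScalarTower.toAlgHom C (MvPolynomial σ C) _).comp (MvPolynomial.mapAlgHom r)
  have hψ {n : P} (hn : ψ n = 0) : algebraMap P B n ∈ q := by
    replace hn : n ∈ RingHom.ker (MvPolynomial.map (r : R →+* C)) :=
      (map_eq_zero_iff _ (IsFractionRing.injective (MvPolynomial σ C) _)).1 hn
    rw [MvPolynomial.ker_map] at hn
    have hle : (RingHom.ker (r : R →+* C)).map MvPolynomial.C ≤ q.comap (algebraMap P B) :=
      Ideal.map_le_iff_le_comap.2 fun x hx ↦ by
        have := (hqr_iff (1 ⊗ₜ x)).2 (by simpa using hx)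
        simpa [IsScalarTower.algebraMap_apply R P B, P, MvPolynomial.algebraMap_eq] using this
    exact hle hn
  have hunit : ∀ s : Submonoid.powers g, IsUnit (algebraMap P B s) := IsLocalization.map_units B
  let ν : B →ₐ[C] FractionRing (MvPolynomial σ C) :=
    IsLocalization.liftAlgHom (M := Submonoid.powers g) (f := ψ) fun s ↦
      .mk0 _ fun h ↦ hq.ne_top (Ideal.eq_top_of_isUnit_mem _ (hψ h) (hunit s))
  refine ⟨ν.comp θ, (injective_iff_map_eq_zero _).2 fun x hx ↦ ?_⟩
  obtain ⟨⟨n, s⟩, hns⟩ := IsLocalization.surj (Submonoid.powers g) (θ x)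
  have hn : ψ n = 0 := by
    have h := congrArg ν hns
    rw [map_mul, show ν (θ x) = 0 from hx, zero_mul] at h
    exact (IsLocalization.lift_eq _ n).symm.trans h.symm
  have hx : θ x ∈ q := (Ideal.mul_unit_mem_iff_mem _ (hunit s)).1 (hns ▸ hψ hn)
  simpa using (hqr_iff (x ⊗ₜ 1)).1 (by simpa using hx)

theorem exists_localizationAway_comp_eq {C A E ι : Type*} [Field C] [CommRing A] [Algebra C A]
    [Algebra.FiniteType C A] [Field E] [Algebra C E] (θ : A →ₐ[C] FractionRing (MvPolynomial ι E)) :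
    ∃ (s : Finset ι) (R : Subalgebra C E) (g : MvPolynomial s R)
      (θ' : A →ₐ[C] Localization.Away g)
      (j : Localization.Away g →ₐ[C] FractionRing (MvPolynomial ι E)), R.FG ∧ g ≠ 0 ∧
      j.comp θ' = θ ∧ ∀ r : R, j (algebraMap R _ r) = algebraMap E _ (r : E) := by
  classical
  let L := FractionRing (MvPolynomial ι E)
  obtain ⟨a, ha⟩ := (Algebra.FiniteType.out : (⊤ : Subalgebra C A).FG)
  obtain ⟨⟨d, hd0⟩, hd⟩ := IsLocalization.exist_integer_multiples_of_finset
    (nonZeroDivisors (MvPolynomial ι E)) (a.image θ)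
  choose! n hn using fun x (hx : x ∈ a) ↦ hd (θ x) (Finset.mem_image_of_mem θ hx)
  obtain ⟨s, R, hR, hRs⟩ : ∃ (s : Finset ι) (R : Subalgebra C E), R.FG ∧
      ∀ p ∈ insert d (a.image n), ∃ q : MvPolynomial s R,
        MvPolynomial.rename (↑) (MvPolynomial.mapAlgHom R.val q) = p :=
    exists_comm.1 (exists_fg_finset_forall_exists_rename_eq _)
  let f : MvPolynomial s R →ₐ[C] L := (IsScalarTower.toAlgHom C (MvPolynomial ι E) L).comp
    (((MvPolynomial.rename (↑) : _ →ₐ[E] _).restrictScalars C).comp (MvPolynomial.mapAlgHom R.val))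
  have hf : Function.Injective f := (IsFractionRing.injective (MvPolynomial ι E) L).comp
    ((MvPolynomial.rename_injective _ Subtype.val_injective).comp
      (MvPolynomial.map_injective _ Subtype.val_injective))
  have hfs {p} (hp : p ∈ insert d (a.image n)) : ∃ q, f q = algebraMap _ L p :=
    (hRs p hp).imp fun q hq ↦ congrArg (algebraMap _ L) hq
  obtain ⟨g, hg⟩ := hfs (Finset.mem_insert_self _ _)
  have hd0' : algebraMap _ L d ≠ 0 := IsFractionRing.to_map_ne_zero_of_mem_nonZeroDivisors hd0
  have hg0 : g ≠ 0 := fun h ↦ hd0' (by rw [← hg, h, map_zero])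
  obtain ⟨j, hj, hjf⟩ := exists_injective_localizationAway hf hg0
  obtain ⟨θ', hθ'⟩ := exists_comp_eq_of_forall_mem_range ha θ hj fun x hx ↦ by
    obtain ⟨q, hq⟩ := hfs (Finset.mem_insert_of_mem (Finset.mem_image_of_mem n hx))
    refine ⟨IsLocalization.mk' _ q ⟨g, Submonoid.mem_powers g⟩, mul_left_cancel₀ hd0' ?_⟩
    rw [← hg, ← hjf, AlgHom.toRingHom_eq_coe, RingHom.coe_coe, ← map_mul,
      IsLocalization.mk'_spec'_mk, hjf, hjf, hq, hg, hn x hx, Algebra.smul_def]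
  refine ⟨s, R, g, θ', j, hR, hg0, hθ', fun r ↦ ?_⟩
  rw [IsScalarTower.algebraMap_apply R (MvPolynomial s R), hjf,
    IsScalarTower.algebraMap_apply E (MvPolynomial ι E)]
  simp [f, MvPolynomial.algebraMap_eq, L]

theorem exists_injective_fractionRing_mvPolynomial {E ι : Type*} [Field E] [Algebra C E]
    {θ : A →ₐ[C] FractionRing (MvPolynomial ι E)}
    (hθ : Function.Injective (Algebra.TensorProduct.productLeftAlgHom
      (Algebra.ofId E (FractionRing (MvPolynomial ι E))) θ)) :
    ∃ (s : Finset ι) (ν : A →ₐ[C] FractionRing (MvPolynomial s C)), Function.Injective ν := by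
  obtain ⟨s, R, g, θ', j, hR, hg, rfl, hjR⟩ := exists_localizationAway_comp_eq θ
  have : Algebra.FiniteType C R := R.fg_iff_finiteType.1 hR
  refine ⟨s, exists_injective_of_localization hg (θ := θ') (.of_comp (f := j) ?_)⟩
  have h (z : A ⊗[C] R) : j (Algebra.TensorProduct.productMap θ'
      (IsScalarTower.toAlgHom C R (Localization.Away g)) z) =
      Algebra.TensorProduct.productLeftAlgHom (Algebra.ofId E _) (j.comp θ')
        (Algebra.TensorProduct.comm C A E (Algebra.TensorProduct.map (.id A A) R.val z)) := by
    induction z with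
    | zero => simp only [map_zero]
    | add x y hx hy => simp only [map_add, hx, hy]
    | tmul x r => simp [hjR, Algebra.ofId_apply, mul_comm]
  intro x y hxy
  simp only [Function.comp_apply, h] at hxy
  exact Module.Flat.lTensor_preserves_injective_linearMap (M := A) R.val.toLinearMap
    Subtype.val_injective ((AlgEquiv.injective _) (hθ hxy))

/-! ### Stable spaces of functions and linear differential equations -/

section Semistable

open scoped Pointwise in
theorem mul_mem_span_image {F A M : Type*} [CommSemiring F] [CommSemiring M] [Algebra F M]
    {C : Type*} [CommSemiring C] [CommSemiring A] [Algebra C A] {S T : Submodule C A} {i : A →+* M}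
    {v w : M} (hv : v ∈ Submodule.span F (i '' S)) (hw : w ∈ Submodule.span F (i '' T)) :
    v * w ∈ Submodule.span F (i '' (S * T : Submodule C A)) := by
  have h := Submodule.mul_mem_mul hv hw
  rw [Submodule.span_mul_span, ← Set.image_mul] at h
  exact Submodule.span_mono (Set.image_mono (Submodule.mul_subset_mul ..)) h

variable {C F E M : Type*} [Field C] [Field F] [Field E] [Field M] [Algebra C E]
  [Algebra C M] [Algebra F M] {i σ : E →ₐ[C] M}

theorem exists_mem_span_image_pow {T : Submodule C E} {m : M}
    (hT : ∀ t ∈ T, ∃ w ∈ Submodule.span F (i '' T), σ t = m * w) {n : ℕ} {p : E} (hp : p ∈ T ^ n) :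
    ∃ w ∈ Submodule.span F (i '' (T ^ n : Submodule C E)), σ p = m ^ n * w := by
  induction hp using Submodule.pow_induction_on_left' with
  | algebraMap c =>
    refine ⟨i (algebraMap C E c), Submodule.subset_span ⟨_, ?_, rfl⟩, by simp⟩
    rw [pow_zero]
    exact Submodule.algebraMap_mem c
  | add x y n _ _ hx hy =>
    obtain ⟨v, hv, hx⟩ := hx
    obtain ⟨w, hw, hy⟩ := hy
    exact ⟨v + w, add_mem hv hw, by rw [map_add, hx, hy, mul_add]⟩
  | mem_mul t ht n x _ hx =>
    obtain ⟨v, hv, ht⟩ := hT t ht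
    obtain ⟨w, hw, hx⟩ := hx
    refine ⟨v * w, ?_, by rw [map_mul, ht, hx, pow_succ]; ring⟩
    rw [pow_succ']
    exact mul_mem_span_image (i := (i : E →+* M)) hv hw

variable [Algebra C F] [IsScalarTower C F M]

theorem exists_matrix_eq_sum {ι κ : Type*} [Fintype ι] {y : ι → E} {z : κ → M}
    (hz : ∀ j, z j ∈ Submodule.span F (i '' (Submodule.span C (Set.range y)))) :
    ∃ c : Matrix ι κ F, ∀ j, z j = ∑ l, algebraMap F M (c l j) * i (y l) := by
  have h : Submodule.span F (i '' (Submodule.span C (Set.range y))) =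
      Submodule.span F (Set.range (i ∘ y)) := by
    rw [← AlgHom.coe_toLinearMap, ← Submodule.map_coe, Submodule.map_span,
      Submodule.span_span_of_tower, ← Set.range_comp]
  simp only [h, Submodule.mem_span_range_iff_exists_fun] at hz
  choose c hc using hz
  exact ⟨.of fun l j ↦ c j l, fun j ↦ by simp [← hc, Algebra.smul_def]⟩

variable [Differential E] [Differential M]

theorem exists_map_det_wronskian_eq (hF : ∀ c : F, (algebraMap F M c)′ = 0)
    (hi : IsDifferentialHom (i : E →+* M)) (hσ : IsDifferentialHom (σ : E →+* M)) {n : ℕ}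
    {y : Fin n → E} {m : M} (h : ∀ j, ∃ w ∈ Submodule.span F
      (i '' (Submodule.span C (Set.range y))), σ (y j) = m * w) :
    ∃ d : F, σ (wronskian y).det = m ^ n * (algebraMap F M d * i (wronskian y).det) := by
  choose z hz hσz using h
  obtain ⟨c, hc⟩ := exists_matrix_eq_sum hz
  have hw (f : E →ₐ[C] M) (hf : IsDifferentialHom (f : E →+* M)) :
      f (wronskian y).det = (wronskian (f ∘ y)).det :=
    ((f : E →+* M).map_det _).trans (congrArg _ (wronskian_map hf y).symm)
  have hσy : σ ∘ y = fun j ↦ m * ∑ l, c.map (algebraMap F M) l j * (i ∘ y) l :=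
    funext fun j ↦ (hσz j).trans (congrArg _ (hc j))
  refine ⟨c.det, ?_⟩
  rw [hw σ hσ, hw i hi, hσy, det_wronskian_const_mul,
    wronskian_mul (c := c.map (algebraMap F M)) fun l j ↦ hF (c l j), Matrix.det_mul,
    RingHom.map_det, RingHom.mapMatrix_apply, mul_comm (wronskian _).det]

/-- The normalisation of the space spanned by `y`: products of `n` elements of the span of `y`,
divided by the Wronskian determinant of `y`. Multiplying `y` by a common factor does not change
it. -/
noncomputable def normalization (C : Type*) {E : Type*} [Field C] [Field E] [Algebra C E]
    [Differential E] {n : ℕ} (y : Fin n → E) : Submodule C E :=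
  (Submodule.span C (Set.range y) ^ n).map (LinearMap.mulLeft C (wronskian y).det⁻¹)

theorem finite_normalization {n : ℕ} (y : Fin n → E) : Module.Finite C (normalization C y) :=
  .of_fg (((Submodule.fg_span (Set.finite_range y)).pow n).map _)

theorem map_mem_span_image_normalization (hF : ∀ c : F, (algebraMap F M c)′ = 0)
    (hi : IsDifferentialHom (i : E →+* M)) (hσ : IsDifferentialHom (σ : E →+* M)) {n : ℕ}
    {y : Fin n → E} (hy : (wronskian y).det ≠ 0) {m : M} (hm : m ≠ 0)
    (h : ∀ t ∈ Submodule.span C (Set.range y), ∃ w ∈ Submodule.span F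
      (i '' (Submodule.span C (Set.range y))), σ t = m * w) {t : E} (ht : t ∈ normalization C y) :
    σ t ∈ Submodule.span F (i '' (normalization C y)) := by
  obtain ⟨d, hd⟩ := exists_map_det_wronskian_eq hF hi hσ fun j ↦ h _
    (Submodule.subset_span (Set.mem_range_self j))
  obtain ⟨p, hp, rfl⟩ := ht
  obtain ⟨w, hw, hpw⟩ := exists_mem_span_image_pow h hp
  have hd0 : algebraMap F M d ≠ 0 := fun h0 ↦ by
    rw [h0, zero_mul, mul_zero, map_eq_zero] at hd
    exact hy hd
  have hσ : σ ((wronskian y).det⁻¹ * p) = d⁻¹ • (i (wronskian y).det⁻¹ * w) := by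
    simp only [map_mul, map_inv₀, hd, hpw, Algebra.smul_def]
    field_simp
  rw [LinearMap.mulLeft_apply, hσ]
  refine Submodule.smul_mem _ _ ?_
  have h := Submodule.apply_mem_span_image_of_mem_span
    (LinearMap.mulLeft F (i (wronskian y).det⁻¹)) hw
  rw [← Set.image_comp] at h
  refine Submodule.span_mono ?_ h
  rintro _ ⟨q, hq, rfl⟩
  exact ⟨_, Submodule.mem_map_of_mem hq, map_mul ..⟩

theorem exists_mem_normalization_mul_eq {n : ℕ} {y : Fin n → E} (hy : (wronskian y).det ≠ 0)
    {a b : E} (ha : a ∈ Submodule.span C (Set.range y)) (hb : b ∈ Submodule.span C (Set.range y))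
    (hb0 : b ≠ 0) :
    ∃ p ∈ normalization C y, ∃ q ∈ normalization C y, q ≠ 0 ∧ b * p = a * q := by
  cases n with
  | zero => simp_all
  | succ n =>
    have h {x : E} (hx : x ∈ Submodule.span C (Set.range y)) :
        (wronskian y).det⁻¹ * (b ^ n * x) ∈ normalization C y :=
      Submodule.mem_map_of_mem (f := LinearMap.mulLeft C _) <| by
        rw [pow_succ]
        exact Submodule.mul_mem_mul (Submodule.pow_mem_pow _ hb n) hx
    exact ⟨_, h ha, _, h hb, mul_ne_zero (inv_ne_zero hy) (mul_ne_zero (pow_ne_zero n hb0) hb0),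
      by ring⟩

theorem exists_forall_iterate_deriv_add_sum_eq_zero {n : ℕ} {y : Fin n → E}
    (hy : (wronskian y).det ≠ 0) : ∃ a : Fin n → E, ∀ j,
      Differential.deriv^[n] (y j) + ∑ r, a r * Differential.deriv^[r] (y j) = 0 := by
  refine ⟨Matrix.vecMul (fun j ↦ -Differential.deriv^[n] (y j)) (wronskian y)⁻¹, fun j ↦ ?_⟩
  have h := congrFun (Matrix.vecMul_vecMul (fun j ↦ -Differential.deriv^[n] (y j)) (wronskian y)⁻¹
    (wronskian y)) j
  rw [Matrix.nonsing_inv_mul _ hy.isUnit, Matrix.vecMul_one] at h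
  exact (congrArg _ h).trans (add_neg_cancel _)

theorem map_coeff_eq (hF : ∀ c : F, (algebraMap F M c)′ = 0)
    (hi : IsDifferentialHom (i : E →+* M)) (hσ : IsDifferentialHom (σ : E →+* M)) {n : ℕ}
    {y : Fin n → E} (hy : (wronskian y).det ≠ 0) (h : ∀ j, σ (y j) ∈ Submodule.span F
      (i '' (Submodule.span C (Set.range y)))) {a : Fin n → E} (ha : ∀ j,
      Differential.deriv^[n] (y j) + ∑ r, a r * Differential.deriv^[r] (y j) = 0) (r : Fin n) :
    σ (a r) = i (a r) := by
  obtain ⟨c, hc⟩ := exists_matrix_eq_sum h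
  have eq_zero (f : E →ₐ[C] M) (hf : IsDifferentialHom (f : E →+* M)) (j) :
      Differential.deriv^[n] (f (y j)) + ∑ r, f (a r) * Differential.deriv^[r] (f (y j)) = 0 := by
    have hf (r x) : f (Differential.deriv^[r] x) = Differential.deriv^[r] (f x) :=
      hf.map_iterate r x
    simp only [← hf, ← map_mul, ← map_sum, ← map_add, ha, map_zero]
  have iterate_deriv_σ (r j) : Differential.deriv^[r] (σ (y j)) =
      ∑ l, algebraMap F M (c l j) * Differential.deriv^[r] (i (y l)) := by
    rw [hc, iterate_deriv_sum_mul _ fun l ↦ hF (c l j)]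
  have hi_σ (j) : Differential.deriv^[n] (σ (y j)) +
      ∑ r, i (a r) * Differential.deriv^[r] (σ (y j)) = 0 := by
    simp only [iterate_deriv_σ, Finset.mul_sum]
    rw [Finset.sum_comm, ← Finset.sum_add_distrib]
    refine Finset.sum_eq_zero fun l _ ↦ ?_
    rw [← mul_zero (algebraMap F M (c l j)), ← eq_zero i hi l, mul_add, Finset.mul_sum]
    simp only [mul_left_comm]
  have hdet : (wronskian (σ ∘ y)).det ≠ 0 := by
    rw [show σ ∘ y = (σ : E →+* M) ∘ y from rfl, wronskian_map hσ, ← RingHom.mapMatrix_apply,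
      ← RingHom.map_det]
    exact (map_ne_zero _).2 hy
  have hsub : Matrix.vecMul (fun r ↦ σ (a r) - i (a r)) (wronskian (σ ∘ y)) = 0 :=
    funext fun j ↦ by
      have h := (eq_zero σ hσ j).trans (hi_σ j).symm
      simpa [Matrix.vecMul, dotProduct, wronskian, sub_mul, sub_eq_zero] using h
  exact sub_eq_zero.1 (congrFun (Matrix.eq_zero_of_vecMul_eq_zero hdet hsub) r)

end Semistable

section ConstantsAlgebra

variable {k M : Type*} [Field k] [Differential k] [Field M] [Differential M] [Algebra k M]

theorem IsDifferentialHom.differentialAlgebra {E : Type*} [Field E] [Differential E] [Algebra k E]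
    [DifferentialAlgebra k E] {i : E →ₐ[k] M} (hi : IsDifferentialHom (i : E →+* M)) :
    DifferentialAlgebra k M where
  deriv_algebraMap x := by
    rw [← i.commutes, ← i.commutes, ← deriv_algebraMap]
    exact (hi _).symm

theorem deriv_algebraMap_constants (c : constants M) : (algebraMap (constants M) M c)′ = 0 :=
  mem_constants.1 c.2

instance containConstants_constants : Differential.ContainConstants (constants M) M where
  mem_range_of_deriv_eq_zero h := ⟨⟨_, mem_constants.2 h⟩, rfl⟩

variable [DifferentialAlgebra k M]

theorem containConstants_of_tower [Differential.ContainConstants k M] :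
    Differential.ContainConstants (constants k) M where
  mem_range_of_deriv_eq_zero {x} hx := by
    obtain ⟨y, rfl⟩ := mem_range_of_deriv_eq_zero k hx
    rw [deriv_algebraMap, map_eq_zero] at hx
    exact ⟨⟨y, mem_constants.2 hx⟩, rfl⟩

/- Low priority keeps `Algebra.id` the preferred instance when `M = k`. -/
instance (priority := low) constantsAlgebra : Algebra (constants k) (constants M) :=
  ((algebraMap (constants k) M).codRestrict _ fun c ↦ mem_constants.2 <| by
    rw [IsScalarTower.algebraMap_apply (constants k) k, deriv_algebraMap,
      deriv_algebraMap_constants, map_zero]).toAlgebra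

instance (priority := low) isScalarTower_constants :
    IsScalarTower (constants k) (constants M) M :=
  .of_algebraMap_eq fun _ ↦ rfl

end ConstantsAlgebra

section Stable

variable {k E : Type u} [Field k] [Differential k] [Field E] [Differential E] [Algebra k E]

/-- A space of elements of a differential field `E` over `k` is stable if any two differential
embeddings of `E` over `k` into an algebraically closed differential field `M` carry it into one
another, up to constants of `M`. This replaces stability under the differential Galois group. -/
def IsStable (T : Submodule (constants k) E) : Prop :=
  ∀ ⦃M : Type u⦄ [Field M] [CharZero M] [IsAlgClosed M] [Differential M] [Algebra k M]
    ⦃i σ : E →ₐ[k] M⦄, IsDifferentialHom (i : E →+* M) → IsDifferentialHom (σ : E →+* M) →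
    ∀ t ∈ T, σ t ∈ Submodule.span (constants M) (i '' T)

/-- The variant of `IsStable` in which the two images agree up to constants and a common nonzero
factor. -/
def IsSemistable (T : Submodule (constants k) E) : Prop :=
  ∀ ⦃M : Type u⦄ [Field M] [CharZero M] [IsAlgClosed M] [Differential M] [Algebra k M]
    ⦃i σ : E →ₐ[k] M⦄, IsDifferentialHom (i : E →+* M) → IsDifferentialHom (σ : E →+* M) →
    ∃ m : M, m ≠ 0 ∧ ∀ t ∈ T, ∃ w ∈ Submodule.span (constants M) (i '' T), σ t = m * w

theorem IsStable.sup {S T : Submodule (constants k) E} (hS : IsStable S) (hT : IsStable T) :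
    IsStable (S ⊔ T) := by
  intro M _ _ _ _ _ i σ hi hσ t ht
  obtain ⟨a, ha, b, hb, rfl⟩ := Submodule.mem_sup.1 ht
  rw [map_add]
  exact add_mem
    (Submodule.span_mono (Set.image_mono (SetLike.coe_subset_coe.2 le_sup_left)) (hS hi hσ a ha))
    (Submodule.span_mono (Set.image_mono (SetLike.coe_subset_coe.2 le_sup_right)) (hT hi hσ b hb))

theorem isStable_bot : IsStable (⊥ : Submodule (constants k) E) := by
  rintro M _ _ _ _ _ i σ - - _ rfl
  rw [map_zero]
  exact zero_mem _

theorem exists_finite_isStable_le {ι : Type*} (s : Finset ι) {T : ι → Submodule (constants k) E}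
    [∀ j, Module.Finite (constants k) (T j)] (hs : ∀ j, IsStable (T j)) :
    ∃ S : Submodule (constants k) E, Module.Finite (constants k) S ∧ IsStable S ∧
      ∀ j ∈ s, T j ≤ S :=
  ⟨s.sup T, inferInstance, Finset.sup_induction isStable_bot (fun _ h _ ↦ h.sup) fun j _ ↦ hs j,
    fun _ ↦ Finset.le_sup⟩

variable [DifferentialAlgebra k E]

theorem mem_range_algebraMap_of_forall_eq [CharZero k] {e : E}
    (h : ∀ ⦃M : Type u⦄ [Field M] [CharZero M] [IsAlgClosed M] [Differential M]
      [Algebra k M] ⦃i σ : E →ₐ[k] M⦄, IsDifferentialHom (i : E →+* M) →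
      IsDifferentialHom (σ : E →+* M) → σ e = i e) :
    e ∈ Set.range (algebraMap k E) := by
  by_contra he
  obtain ⟨M, _, _, _, _, _, i, σ, hi, hσ, hne⟩ := exists_differential_algHom_ne he
  exact hne (h hi hσ).symm

variable [Differential.ContainConstants k E]

theorem exists_basis_det_wronskian_ne_zero (T : Submodule (constants k) E)
    [Module.Finite (constants k) T] : ∃ (n : ℕ) (y : Fin n → E),
      LinearIndependent (constants k) y ∧ Submodule.span (constants k) (Set.range y) = T ∧
        (wronskian y).det ≠ 0 := by
  have := containConstants_of_tower (k := k) (M := E)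
  have : Module.Finite (constants k) (Submodule.span (constants k) (T : Set E)) := by
    rwa [Submodule.span_eq]
  obtain ⟨y, -, hy, hli⟩ := Submodule.exists_fun_fin_finrank_span_eq (constants k) (T : Set E)
  exact ⟨_, y, hli, hy.trans T.span_eq, det_wronskian_ne_zero hli⟩

theorem IsSemistable.exists_isStable {T : Submodule (constants k) E}
    [Module.Finite (constants k) T] (hT : IsSemistable T) :
    ∃ S : Submodule (constants k) E, Module.Finite (constants k) S ∧ IsStable S ∧
      ∀ a ∈ T, ∀ b ∈ T, b ≠ 0 → ∃ p ∈ S, ∃ q ∈ S, q ≠ 0 ∧ b * p = a * q := by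
  obtain ⟨n, y, -, rfl, hy⟩ := exists_basis_det_wronskian_ne_zero T
  refine ⟨normalization (constants k) y, finite_normalization y, ?_,
    fun a ha b hb hb0 ↦ exists_mem_normalization_mul_eq hy ha hb hb0⟩
  intro M _ _ _ _ _ i σ hi hσ t ht
  have := hi.differentialAlgebra
  obtain ⟨m, hm, h⟩ := hT hi hσ
  exact map_mem_span_image_normalization (i := i.restrictScalars (constants k))
    (σ := σ.restrictScalars (constants k)) deriv_algebraMap_constants hi hσ hy hm h ht

variable [CharZero k]

theorem IsStable.exists_linear_differential_equation {T : Submodule (constants k) E}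
    [Module.Finite (constants k) T] (hT : IsStable T) :
    ∃ (n : ℕ) (y : Fin n → E) (a : Fin n → E), LinearIndependent (constants k) y ∧
      Submodule.span (constants k) (Set.range y) = T ∧
      (∀ r, a r ∈ Set.range (algebraMap k E)) ∧
      ∀ j, Differential.deriv^[n] (y j) + ∑ r, a r * Differential.deriv^[r] (y j) = 0 := by
  obtain ⟨n, y, hli, rfl, hy⟩ := exists_basis_det_wronskian_ne_zero T
  obtain ⟨a, ha⟩ := exists_forall_iterate_deriv_add_sum_eq_zero hy
  refine ⟨n, y, a, hli, rfl, fun r ↦ mem_range_algebraMap_of_forall_eq ?_, ha⟩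
  intro M _ _ _ _ _ i σ hi hσ
  have := hi.differentialAlgebra
  exact map_coeff_eq (i := i.restrictScalars (constants k)) (σ := σ.restrictScalars (constants k))
    deriv_algebraMap_constants hi hσ hy
    (fun j ↦ hT hi hσ _ (Submodule.subset_span (Set.mem_range_self j))) ha r

end Stable

/-! ### Free composita -/

section Injectivity

theorem injective_of_injective_comp_map {R S A B X : Type*} [CommRing R] [CommRing S] [CommRing A]
    [CommRing B] [CommRing X] [Algebra R S] [Algebra R A] [Algebra R B] [Algebra A B]
    [IsScalarTower R A B] (W : Submonoid A) [IsLocalization W B] {h : S ⊗[R] B →+* X}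
    (hh : Function.Injective (h.comp (Algebra.TensorProduct.map (.id R S)
      (IsScalarTower.toAlgHom R A B) : S ⊗[R] A →ₐ[R] S ⊗[R] B).toRingHom)) :
    Function.Injective h := by
  let _ : Algebra (S ⊗[R] A) (S ⊗[R] B) :=
    (Algebra.TensorProduct.map (.id S S) (IsScalarTower.toAlgHom R A B)).toAlgebra
  have : IsScalarTower S (S ⊗[R] A) (S ⊗[R] B) := .of_algebraMap_eq fun s ↦ by
    simp [RingHom.algebraMap_toAlgebra]
  have := IsLocalization.tensorProduct_tensorProduct_right R S W B
    (by ext; simp [RingHom.algebraMap_toAlgebra])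
  rw [injective_iff_map_eq_zero]
  intro z hz
  obtain ⟨⟨y, w⟩, hy⟩ := IsLocalization.surj
    (W.map (Algebra.TensorProduct.includeRight : A →ₐ[R] S ⊗[R] A)) z
  have hy0 : y = 0 := hh <| by
    rw [map_zero]
    exact (congrArg h hy).symm.trans (by rw [map_mul, hz, zero_mul])
  exact (IsLocalization.map_units _ w).mul_left_eq_zero.1 (by rw [hy, hy0, map_zero])

theorem exists_injective_tensorProduct {k K ι : Type*} (L : Type*) [Field k] [Field K] [Field L]
    [Algebra k K] [Algebra k L] (ψ : K →ₐ[k] FractionRing (MvPolynomial ι k)) :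
    ∃ Ψ : L ⊗[k] K →ₐ[L] FractionRing (MvPolynomial ι L), Function.Injective Ψ := by
  let g : MvPolynomial ι k →ₐ[k] FractionRing (MvPolynomial ι L) :=
    (IsScalarTower.toAlgHom k (MvPolynomial ι L) _).comp
      (MvPolynomial.mapAlgHom (Algebra.ofId k L))
  have hg : Function.Injective g := (IsFractionRing.injective (MvPolynomial ι L) _).comp
    (MvPolynomial.map_injective _ (algebraMap k L).injective)
  let G : FractionRing (MvPolynomial ι k) →ₐ[k] FractionRing (MvPolynomial ι L) :=
    IsFractionRing.liftAlgHom hg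
  let Φ : L ⊗[k] FractionRing (MvPolynomial ι k) →ₐ[L] FractionRing (MvPolynomial ι L) :=
    Algebra.TensorProduct.productLeftAlgHom (Algebra.ofId L _) G
  have hΦ (z : L ⊗[k] MvPolynomial ι k) : Φ (Algebra.TensorProduct.map (.id k L)
      (IsScalarTower.toAlgHom k (MvPolynomial ι k) (FractionRing (MvPolynomial ι k))) z) =
        algebraMap _ _ (MvPolynomial.algebraTensorAlgEquiv k L z) := by
    induction z with
    | zero => simp only [map_zero]
    | add x y hx hy => simp only [map_add, hx, hy]
    | tmul e p =>
      have hp : G (algebraMap _ _ p) = g p :=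
        IsFractionRing.lift_algebraMap (g := g.toRingHom) hg p
      simp [Φ, hp, g, Algebra.smul_def, MvPolynomial.algebraTensorAlgEquiv_tmul,
        Algebra.ofId_apply, IsScalarTower.algebraMap_apply L (MvPolynomial ι L) (FractionRing _)]
  have hinj : Function.Injective Φ :=
    injective_of_injective_comp_map (h := Φ.toRingHom) (nonZeroDivisors (MvPolynomial ι k))
      fun x y hxy ↦ (MvPolynomial.algebraTensorAlgEquiv k L).injective <|
        IsFractionRing.injective (MvPolynomial ι L) (FractionRing (MvPolynomial ι L)) <|
          (hΦ x).symm.trans (hxy.trans (hΦ y))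
  exact ⟨Φ.comp (Algebra.TensorProduct.map (.id L L) ψ), hinj.comp
    (Module.Flat.lTensor_preserves_injective_linearMap (M := L) ψ.toLinearMap ψ.injective)⟩

theorem isDomain_tensorProduct_of_algHom {k K ι : Type*} (L : Type*) [Field k] [Field K] [Field L]
    [Algebra k K] [Algebra k L] (ψ : K →ₐ[k] FractionRing (MvPolynomial ι k)) :
    IsDomain (L ⊗[k] K) :=
  have ⟨Ψ, hΨ⟩ := exists_injective_tensorProduct L ψ
  hΨ.isDomain Ψ.toRingHom

end Injectivity

section FreeCompositum

variable (k E K : Type*) [Field k] [Field E] [Field K] [Algebra k E] [Algebra k K]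

/-- The compositum of two extensions of `k` in which they are linearly disjoint. -/
def FreeCompositum : Type _ := FractionRing (E ⊗[k] K)

namespace FreeCompositum

noncomputable instance : CommRing (FreeCompositum k E K) :=
  inferInstanceAs (CommRing (FractionRing (E ⊗[k] K)))

noncomputable instance [IsDomain (E ⊗[k] K)] : Field (FreeCompositum k E K) :=
  inferInstanceAs (Field (FractionRing (E ⊗[k] K)))

noncomputable instance : Algebra (E ⊗[k] K) (FreeCompositum k E K) :=
  inferInstanceAs (Algebra (E ⊗[k] K) (FractionRing (E ⊗[k] K)))

instance : IsFractionRing (E ⊗[k] K) (FreeCompositum k E K) :=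
  inferInstanceAs (IsFractionRing (E ⊗[k] K) (FractionRing (E ⊗[k] K)))

noncomputable instance : Algebra k (FreeCompositum k E K) :=
  inferInstanceAs (Algebra k (FractionRing (E ⊗[k] K)))

instance : IsScalarTower k (E ⊗[k] K) (FreeCompositum k E K) :=
  inferInstanceAs (IsScalarTower k (E ⊗[k] K) (FractionRing (E ⊗[k] K)))

noncomputable instance : Algebra E (FreeCompositum k E K) :=
  inferInstanceAs (Algebra E (FractionRing (E ⊗[k] K)))

instance : IsScalarTower E (E ⊗[k] K) (FreeCompositum k E K) :=
  inferInstanceAs (IsScalarTower E (E ⊗[k] K) (FractionRing (E ⊗[k] K)))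

instance : IsScalarTower k E (FreeCompositum k E K) :=
  inferInstanceAs (IsScalarTower k E (FractionRing (E ⊗[k] K)))

/-- The embedding of the left factor. -/
noncomputable def inl : E →ₐ[k] FreeCompositum k E K :=
  (IsScalarTower.toAlgHom k (E ⊗[k] K) _).comp Algebra.TensorProduct.includeLeft

/-- The embedding of the right factor. -/
noncomputable def inr : K →ₐ[k] FreeCompositum k E K :=
  (IsScalarTower.toAlgHom k (E ⊗[k] K) _).comp Algebra.TensorProduct.includeRight

variable {k E}

theorem algebraMap_tmul (e : E) (x : K) :
    algebraMap (E ⊗[k] K) (FreeCompositum k E K) (e ⊗ₜ x) = inl k E K e * inr k E K x := by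
  simp [inl, inr, ← map_mul]

theorem algebraMap_map_injective {M : Type*} [Field M] [Algebra k M] [IsDomain (M ⊗[k] K)]
    (i : E →ₐ[k] M) :
    Function.Injective ((IsScalarTower.toAlgHom k (M ⊗[k] K) (FreeCompositum k M K)).comp
      (Algebra.TensorProduct.map i (.id k K))) :=
  (IsFractionRing.injective (M ⊗[k] K) _).comp
    (Module.Flat.rTensor_preserves_injective_linearMap (M := K) i.toLinearMap i.injective)

variable {M : Type*} [Field M] [Algebra k M] [IsDomain (M ⊗[k] K)] [IsDomain (E ⊗[k] K)]

/-- The embedding of free composita induced by an embedding of the left factors. -/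
noncomputable def map (i : E →ₐ[k] M) : FreeCompositum k E K →ₐ[k] FreeCompositum k M K :=
  IsFractionRing.liftAlgHom (algebraMap_map_injective K i)

variable {K}

theorem map_algebraMap (i : E →ₐ[k] M) (z : E ⊗[k] K) :
    map K i (algebraMap (E ⊗[k] K) (FreeCompositum k E K) z) =
      algebraMap (M ⊗[k] K) (FreeCompositum k M K) (Algebra.TensorProduct.map i (.id k K) z) :=
  IsFractionRing.lift_algebraMap (algebraMap_map_injective K i) z

@[simp]
theorem map_inl (i : E →ₐ[k] M) (e : E) :
    map K i (inl k E K e) = inl k M K (i e) := by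
  simp [inl, map_algebraMap]

@[simp]
theorem map_inr (i : E →ₐ[k] M) (x : K) :
    map K i (inr k E K x) = inr k M K x := by
  simp [inr, map_algebraMap]

theorem productLeftAlgHom_map_injective {C F : Type*} [Field C] [Field F] [Algebra C k]
    [Algebra C E] [IsScalarTower C k E] [Algebra C F] [Algebra C M]
    [Algebra F M] [IsScalarTower C F M] [IsScalarTower C k M]
    [Algebra C (FreeCompositum k E K)] [IsScalarTower C k (FreeCompositum k E K)]
    [Algebra C (FreeCompositum k M K)] [IsScalarTower C k (FreeCompositum k M K)]
    [Algebra F (FreeCompositum k M K)] [IsScalarTower F M (FreeCompositum k M K)]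
    [IsScalarTower C F (FreeCompositum k M K)] {i : E →ₐ[k] M}
    (hi : Function.Injective (Algebra.TensorProduct.productLeftAlgHom (Algebra.ofId F M)
      (i.restrictScalars C) : F ⊗[C] E →ₐ[F] M)) :
    Function.Injective (Algebra.TensorProduct.productLeftAlgHom
      (Algebra.ofId F (FreeCompositum k M K)) ((map K i).restrictScalars C) :
        F ⊗[C] FreeCompositum k E K →ₐ[F] FreeCompositum k M K) := by
  have := IsScalarTower.to₁₃₄ C k (E ⊗[k] K) (FreeCompositum k E K)
  let g : E ⊗[C] F →ₐ[k] M :=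
    Algebra.TensorProduct.productLeftAlgHom i (IsScalarTower.toAlgHom C F M)
  have hg : Function.Injective g := (productMap_injective F hi :)
  let α : F ⊗[C] (E ⊗[k] K) ≃ₗ[C] (E ⊗[C] F) ⊗[k] K :=
    (Algebra.TensorProduct.comm C F (E ⊗[k] K)).toLinearEquiv ≪≫ₗ
      (TensorProduct.AlgebraTensorModule.rightComm C k k E K F).restrictScalars C
  let h := Algebra.TensorProduct.productLeftAlgHom (Algebra.ofId F (FreeCompositum k M K))
    ((map K i).restrictScalars C)
  have hα (z : F ⊗[C] (E ⊗[k] K)) : h (Algebra.TensorProduct.map (.id C F)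
      (IsScalarTower.toAlgHom C (E ⊗[k] K) (FreeCompositum k E K)) z) =
        algebraMap (M ⊗[k] K) _ (Algebra.TensorProduct.map g (.id k K) (α z)) := by
    induction z with
    | zero => simp only [map_zero]
    | add x y hx hy => simp only [map_add, hx, hy]
    | tmul c w =>
      induction w with
      | zero => simp only [TensorProduct.tmul_zero, map_zero]
      | add x y hx hy => simp only [TensorProduct.tmul_add, map_add, hx, hy]
      | tmul e x =>
        have hc : algebraMap F (FreeCompositum k M K) c =
            algebraMap (M ⊗[k] K) _ (algebraMap F M c ⊗ₜ 1) :=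
          (IsScalarTower.algebraMap_apply F M _ c).trans <|
            IsScalarTower.algebraMap_apply M (M ⊗[k] K) _ _
        simp [h, α, g, Algebra.ofId_apply, map_algebraMap, hc, ← map_mul, mul_comm]
  refine injective_of_injective_comp_map (h := h.toRingHom) (nonZeroDivisors (E ⊗[k] K))
      fun x y hxy ↦ α.injective <|
        Module.Flat.rTensor_preserves_injective_linearMap (M := K) g.toLinearMap hg <|
          IsFractionRing.injective (M ⊗[k] K) (FreeCompositum k M K) <|
            (hα x).symm.trans (hxy.trans (hα y))

section Differential

variable {k E K M : Type*} [Field k] [CharZero k] [Differential k] [Field E] [Differential E]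
  [Algebra k E] [DifferentialAlgebra k E] [Field K] [Differential K] [Algebra k K]
  [DifferentialAlgebra k K] [IsDomain (E ⊗[k] K)] [Field M] [Differential M] [Algebra k M]
  [DifferentialAlgebra k M] [IsDomain (M ⊗[k] K)]

noncomputable instance : Differential (FreeCompositum k E K) :=
  (exists_differential_fractionRing_tensorProduct k E K).choose

theorem isDifferentialHom_inl : IsDifferentialHom (inl k E K : E →+* FreeCompositum k E K) :=
  fun e ↦ ((exists_differential_fractionRing_tensorProduct k E K).choose_spec.1 e).symm

theorem isDifferentialHom_inr : IsDifferentialHom (inr k E K : K →+* FreeCompositum k E K) :=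
  fun x ↦ ((exists_differential_fractionRing_tensorProduct k E K).choose_spec.2 x).symm

instance : DifferentialAlgebra E (FreeCompositum k E K) where
  deriv_algebraMap e := (isDifferentialHom_inl e).symm

instance : DifferentialAlgebra k (FreeCompositum k E K) where
  deriv_algebraMap c := by
    rw [IsScalarTower.algebraMap_apply k E (FreeCompositum k E K), deriv_algebraMap,
      deriv_algebraMap, ← IsScalarTower.algebraMap_apply]

theorem isDifferentialHom_map {i : E →ₐ[k] M} (hi : IsDifferentialHom (i : E →+* M)) :
    IsDifferentialHom (map K i : FreeCompositum k E K →+* FreeCompositum k M K) := by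
  refine .of_comp_algebraMap (R := E ⊗[k] K) fun z ↦ ?_
  simp only [RingHom.coe_coe]
  induction z with
  | zero => simp only [map_zero]
  | add z w hz hw => simp only [map_add, hz, hw]
  | tmul e x =>
    have hl (e : E) : (inl k E K e)′ = inl k E K e′ := (isDifferentialHom_inl e).symm
    have hl' (e : M) : (inl k M K e)′ = inl k M K e′ := (isDifferentialHom_inl e).symm
    have hr (x : K) : (inr k E K x)′ = inr k E K x′ := (isDifferentialHom_inr x).symm
    have hr' (x : K) : (inr k M K x)′ = inr k M K x′ := (isDifferentialHom_inr x).symm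
    have hi (e : E) : (i e)′ = i e′ := (hi e).symm
    simp [algebraMap_tmul, hl, hl', hr, hr', hi]

end Differential

instance [CharZero E] : CharZero (FreeCompositum k E K) :=
  charZero_of_injective_algebraMap (algebraMap E _).injective

end FreeCompositum
end FreeCompositum

/-! ### Descent along constants -/

section ProductMap

variable {C E F M : Type*} [Field C] [Field E] [Field F] [Field M] [Algebra C E] [Algebra C F]
  [Algebra C M]

theorem exists_mul_productMap_eq_of_mem_closure {f : E →ₐ[C] M} {g : F →ₐ[C] M} {x : M}
    (hx : x ∈ Subfield.closure (Set.range f ∪ Set.range g)) :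
    ∃ α β : E ⊗[C] F, Algebra.TensorProduct.productMap f g β ≠ 0 ∧
      x * Algebra.TensorProduct.productMap f g β = Algebra.TensorProduct.productMap f g α := by
  let P := Algebra.TensorProduct.productMap f g
  have hP : Subring.closure (Set.range f ∪ Set.range g) ≤ (P : E ⊗[C] F →+* M).range := by
    rw [Subring.closure_le, Set.union_subset_iff]
    constructor
    · rintro _ ⟨e, rfl⟩
      exact ⟨e ⊗ₜ 1, by simp [P]⟩
    · rintro _ ⟨c, rfl⟩
      exact ⟨1 ⊗ₜ c, by simp [P]⟩
  obtain ⟨y, hy, z, hz, rfl⟩ := Subfield.mem_closure_iff.1 hx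
  obtain ⟨α, rfl⟩ := hP hy
  obtain ⟨β, rfl⟩ := hP hz
  by_cases h : P β = 0
  · exact ⟨0, 1, by simp, by simp [P, h]⟩
  · exact ⟨α, β, h, div_mul_cancel₀ _ h⟩

variable [Algebra F M] [IsScalarTower C F M] {f : E →ₐ[C] M} {T : Submodule C E}

theorem exists_forall_contract_mem_of_mem_span {y : M}
    (hy : y ∈ Submodule.span F (f '' T)) :
    ∃ z : E ⊗[C] F, Algebra.TensorProduct.productMap f (IsScalarTower.toAlgHom C F M) z = y ∧
      ∀ l, contract z l ∈ T := by
  induction hy using Submodule.span_induction with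
  | zero => exact ⟨0, by simp, by simp⟩
  | mem y hy =>
    obtain ⟨t, ht, rfl⟩ := hy
    exact ⟨t ⊗ₜ 1, by simp, fun l ↦ by simpa using T.smul_mem _ ht⟩
  | add y z _ _ hy hz =>
    obtain ⟨y, rfl, hy⟩ := hy
    obtain ⟨z, rfl, hz⟩ := hz
    exact ⟨y + z, map_add .., fun l ↦ by simpa using T.add_mem (hy l) (hz l)⟩
  | smul c y _ hy =>
    obtain ⟨y, rfl, hy⟩ := hy
    refine ⟨1 ⊗ₜ c * y, by simp [Algebra.smul_def], fun l ↦ ?_⟩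
    rw [contract_tmul_mul, one_mul]
    exact hy _

theorem exists_mem_mul_eq_of_mem_span (hf : Function.Injective
      (Algebra.TensorProduct.productMap f (IsScalarTower.toAlgHom C F M))) {x : E} {a b : M}
    (ha : a ∈ Submodule.span F (f '' T)) (hb : b ∈ Submodule.span F (f '' T)) (hb0 : b ≠ 0)
    (h : f x * b = a) : ∃ t ∈ T, ∃ t' ∈ T, t' ≠ 0 ∧ x * t' = t := by
  obtain ⟨α, rfl, hα⟩ := exists_forall_contract_mem_of_mem_span ha
  obtain ⟨β, rfl, hβ⟩ := exists_forall_contract_mem_of_mem_span hb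
  obtain ⟨l, hl⟩ := exists_contract_ne_zero (ne_zero_of_map hb0)
  have hx : x ⊗ₜ 1 * β = α := hf (by simpa using h)
  refine ⟨_, hα l, _, hβ l, hl, ?_⟩
  rw [← hx, contract_tmul_mul, LinearMap.mulLeft_one, LinearMap.comp_id]

end ProductMap

section Constants

variable {k M L : Type*} [Field k] [Differential k] [Field M] [Differential M] [Algebra k M]
  [DifferentialAlgebra k M] [Field L] [Differential L] [Algebra k L] [DifferentialAlgebra k L]

/-- The map on constants induced by a differential homomorphism. -/
def constantsMap (f : M →ₐ[k] L) (hf : IsDifferentialHom (f : M →+* L)) :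
    constants M →ₐ[constants k] constants L where
  toRingHom := ((f : M →+* L).comp (constants M).subtype).codRestrict _ fun c ↦
    mem_constants.2 <| (hf _).symm.trans <| by simp [mem_constants.1 c.2]
  commutes' c := Subtype.ext (f.commutes c)

variable [Algebra M L] [DifferentialAlgebra M L]

instance (priority := low) isScalarTower_constants_constants [IsScalarTower k M L] :
    IsScalarTower (constants k) (constants M) (constants L) :=
  .of_algebraMap_eq fun c ↦ Subtype.ext (IsScalarTower.algebraMap_apply k M L c)

theorem productMap_constants_injective : Function.Injective (Algebra.TensorProduct.productMap
    (IsScalarTower.toAlgHom (constants M) M L)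
    (IsScalarTower.toAlgHom (constants M) (constants L) L)) :=
  productMap_injective (constants L) <|
    productLeftAlgHom_injective (constants L) deriv_algebraMap_constants
      fun x ↦ (deriv_algebraMap x).symm

theorem range_algebraMap_constants : Set.range (algebraMap (constants L) L) = {c | c′ = 0} :=
  Subtype.range_coe.trans (Set.ext fun _ ↦ mem_constants)

theorem exists_mem_span_constants_mul_eq [IsScalarTower k M L] {E : Type*} [Field E] [Algebra k E]
    {f : E →ₐ[k] M} {y : M} (hy : algebraMap M L y ∈ Subfield.closure
      (Set.range (algebraMap M L ∘ f) ∪ {c | c′ = 0})) :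
    ∃ a ∈ Submodule.span (constants M) (Set.range f),
      ∃ b ∈ Submodule.span (constants M) (Set.range f), b ≠ 0 ∧ y * b = a := by
  have : IsScalarTower (constants k) (constants M) L :=
    .of_algebraMap_eq fun c ↦ IsScalarTower.algebraMap_apply k M L c
  rw [← range_algebraMap_constants] at hy
  obtain ⟨α, β, hβ, h⟩ := exists_mul_productMap_eq_of_mem_closure
    (f := ((IsScalarTower.toAlgHom k M L).comp f).restrictScalars (constants k))
    (g := IsScalarTower.toAlgHom (constants k) (constants L) L) hy
  let P := Algebra.TensorProduct.productMap (IsScalarTower.toAlgHom (constants M) M L)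
    (IsScalarTower.toAlgHom (constants M) (constants L) L)
  let T := tensorMap (constants M) (f.restrictScalars (constants k))
    (.id (constants k) (constants L))
  have hP (z) : P (T z) = Algebra.TensorProduct.productMap
      (((IsScalarTower.toAlgHom k M L).comp f).restrictScalars (constants k))
      (IsScalarTower.toAlgHom (constants k) (constants L) L) z :=
    productMap_tensorMap ..
  have hT : y ⊗ₜ 1 * T β = T α := productMap_constants_injective <| by
    change P (y ⊗ₜ 1 * T β) = P (T α)
    rw [map_mul, hP, hP, ← h]
    simp [P]
  obtain ⟨a, ha, b, hb, hb0, hab⟩ := exists_mem_span_mul_eq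
    (ne_zero_of_map (f := P) ((hP β).trans_ne hβ)) hT
  exact ⟨a, Submodule.span_mono (Set.image_subset_range ..) ha, b,
    Submodule.span_mono (Set.image_subset_range ..) hb, hb0, hab⟩

end Constants

/-! ### Semistable spaces from rational embeddings -/

section Amalgam

universe v w

variable {C A : Type*} {F : Type u} {Q : Type v} {F₃ : Type w} [Field C] [Field F] [CommRing A]
  [Field Q] [Field F₃] [Algebra C F] [Algebra C A] [Algebra C Q] [Algebra C F₃] [Algebra F F₃]
  [IsScalarTower C F F₃]

theorem productLeftAlgHom_comp_injective {Ω : Type*} [Field Ω] [Algebra C Ω] [Algebra F Ω]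
    [IsScalarTower C F Ω] (j : F₃ →ₐ[F] Ω) {a : A →ₐ[C] F₃} (ha : Function.Injective
      (Algebra.TensorProduct.productLeftAlgHom (Algebra.ofId F F₃) a : F ⊗[C] A →ₐ[F] F₃)) :
    Function.Injective (Algebra.TensorProduct.productLeftAlgHom (Algebra.ofId F Ω)
      ((j.restrictScalars C).comp a) : F ⊗[C] A →ₐ[F] Ω) := by
  have h : Algebra.TensorProduct.productLeftAlgHom (Algebra.ofId F Ω)
      ((j.restrictScalars C).comp a) =
        j.comp (Algebra.TensorProduct.productLeftAlgHom (Algebra.ofId F F₃) a) := by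
    ext
    simp
  rw [h]
  exact (j : F₃ →+* Ω).injective.comp ha

theorem exists_field_amalgam_productLeftAlgHom [IsDomain (F ⊗[C] Q)] {ν : A →ₐ[C] Q}
    (hν : Function.Injective ν) {a : A →ₐ[C] F₃} (ha : Function.Injective
      (Algebra.TensorProduct.productLeftAlgHom (Algebra.ofId F F₃) a : F ⊗[C] A →ₐ[F] F₃)) :
    ∃ (Ω : Type max u v w) (_ : Field Ω) (_ : Algebra C Ω) (_ : Algebra F Ω)
      (_ : IsScalarTower C F Ω) (j : F₃ →ₐ[F] Ω) (u : Q →ₐ[C] Ω), Function.Injective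
        (Algebra.TensorProduct.productLeftAlgHom (Algebra.ofId F Ω) u : F ⊗[C] Q →ₐ[F] Ω) ∧
      (j.restrictScalars C).comp a = u.comp ν := by
  let p := IsScalarTower.toAlgHom F (F ⊗[C] Q) (FractionRing (F ⊗[C] Q))
  have hp : Function.Injective p := IsFractionRing.injective _ _
  have hq : Function.Injective (p.comp (Algebra.TensorProduct.map (.id F F) ν)) :=
    hp.comp (Module.Flat.lTensor_preserves_injective_linearMap (M := F) ν.toLinearMap hν)
  have := ha.isDomain (Algebra.TensorProduct.productLeftAlgHom (Algebra.ofId F F₃) a).toRingHom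
  obtain ⟨Ω, _, _, j, w, h⟩ := exists_field_amalgam ha hq
  let _ : Algebra C Ω := ((algebraMap F Ω).comp (algebraMap C F)).toAlgebra
  have : IsScalarTower C F Ω := .of_algebraMap_eq fun _ ↦ rfl
  let u : Q →ₐ[C] Ω := ((w.comp p).restrictScalars C).comp Algebra.TensorProduct.includeRight
  refine ⟨Ω, ‹_›, ‹_›, ‹_›, ‹_›, j, u, ?_, ?_⟩
  · have hu : Algebra.TensorProduct.productLeftAlgHom (Algebra.ofId F Ω) u = w.comp p := by
      ext
      simp [u]
    rw [hu]
    exact (w : _ →+* Ω).injective.comp hp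
  · ext x
    simpa [u] using DFunLike.congr_fun h (1 ⊗ₜ x)

theorem exists_field_amalgam_pair [IsDomain (F ⊗[C] Q)] {ν : A →ₐ[C] Q}
    (hν : Function.Injective ν) {a b : A →ₐ[C] F₃}
    (ha : Function.Injective
      (Algebra.TensorProduct.productLeftAlgHom (Algebra.ofId F F₃) a : F ⊗[C] A →ₐ[F] F₃))
    (hb : Function.Injective
      (Algebra.TensorProduct.productLeftAlgHom (Algebra.ofId F F₃) b : F ⊗[C] A →ₐ[F] F₃)) :
    ∃ (Ω : Type max u v w) (_ : Field Ω) (_ : Algebra C Ω) (_ : Algebra F Ω)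
      (_ : IsScalarTower C F Ω) (j : F₃ →ₐ[F] Ω) (u v : Q →ₐ[C] Ω),
      Function.Injective
        (Algebra.TensorProduct.productLeftAlgHom (Algebra.ofId F Ω) u : F ⊗[C] Q →ₐ[F] Ω) ∧
      Function.Injective
        (Algebra.TensorProduct.productLeftAlgHom (Algebra.ofId F Ω) v : F ⊗[C] Q →ₐ[F] Ω) ∧
      (j.restrictScalars C).comp a = u.comp ν ∧ (j.restrictScalars C).comp b = v.comp ν := by
  obtain ⟨_, _, _, _, _, j₁, u, hu, hau⟩ := exists_field_amalgam_productLeftAlgHom hν ha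
  have hb' := productLeftAlgHom_comp_injective j₁ hb
  obtain ⟨Ω, f, c, d, s, j₂, v, hv, hbv⟩ := exists_field_amalgam_productLeftAlgHom hν hb'
  have hau' : ((j₂.comp j₁).restrictScalars C).comp a = ((j₂.restrictScalars C).comp u).comp ν :=
    congrArg ((j₂.restrictScalars C).comp ·) hau
  exact ⟨Ω, f, c, d, s, j₂.comp j₁, (j₂.restrictScalars C).comp u, v,
    productLeftAlgHom_comp_injective j₂ hu, hv, hau', hbv⟩

variable {E M : Type*} [Field E] [Field M] [Algebra C E] [Algebra C M] [Algebra F M]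
  [IsScalarTower C F M]

theorem exists_forall_mem_coeffSpace_eq_mul_of_algHom [IsAlgClosed C] [IsAlgClosed F]
    {i σ : E →ₐ[C] M}
    (hi : Function.Injective
      (Algebra.TensorProduct.productLeftAlgHom (Algebra.ofId F M) i : F ⊗[C] E →ₐ[F] M))
    (hσ : Function.Injective
      (Algebra.TensorProduct.productLeftAlgHom (Algebra.ofId F M) σ : F ⊗[C] E →ₐ[F] M))
    {ν : A →ₐ[C] Q} (hν : Function.Injective ν) {a b : A →ₐ[C] F₃}
    (ha : Function.Injective
      (Algebra.TensorProduct.productLeftAlgHom (Algebra.ofId F F₃) a : F ⊗[C] A →ₐ[F] F₃))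
    (hb : Function.Injective
      (Algebra.TensorProduct.productLeftAlgHom (Algebra.ofId F F₃) b : F ⊗[C] A →ₐ[F] F₃))
    {z w : E ⊗[C] A} {g α β : E ⊗[C] Q} (hg : g ≠ 0) (hβ : β ≠ 0)
    (hz : Algebra.TensorProduct.map (.id C E) ν z = g * α)
    (hw : Algebra.TensorProduct.map (.id C E) ν w = g * β)
    (hαβ : ∀ t, β ∣ α * t → β ∣ t)
    (h : tensorMap F i a z * tensorMap F σ b w = tensorMap F i a w * tensorMap F σ b z) :
    ∃ m : M, m ≠ 0 ∧ ∀ t ∈ coeffSpace α ⊔ coeffSpace β,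
      ∃ y ∈ Submodule.span F (i '' (coeffSpace α ⊔ coeffSpace β : Submodule C E)), σ t = m * y := by
  have : IsDomain (F ⊗[C] Q) := isDomain_tensorProduct F Q
  obtain ⟨Ω, _, _, _, _, j, u, v, hu, hv, hju, hjv⟩ := exists_field_amalgam_pair hν ha hb
  have : IsDomain (M ⊗[F] Ω) := isDomain_tensorProduct M Ω
  have hui := tensorMap_injective F hi (u := u) u.injective
  have hvσ := tensorMap_injective F hσ (u := v) v.injective
  let J := Algebra.TensorProduct.map (.id F M) j
  have hJi (t) : J (tensorMap F i a t) =
      tensorMap F i u (Algebra.TensorProduct.map (.id C E) ν t) :=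
    map_tensorMap F hju i t
  have hJσ (t) : J (tensorMap F σ b t) =
      tensorMap F σ v (Algebra.TensorProduct.map (.id C E) ν t) :=
    map_tensorMap F hjv σ t
  refine exists_forall_mem_coeffSpace_eq_mul hu hv
    (hui.ne_iff.2 hβ |>.trans_eq (map_zero _)) (hvσ.ne_iff.2 hβ |>.trans_eq (map_zero _)) hαβ ?_
  have h' := congrArg J h
  simp only [map_mul, hJi, hJσ, hz, hw] at h'
  refine mul_left_cancel₀ (mul_ne_zero (hui.ne_iff.2 hg |>.trans_eq (map_zero _))
    (hvσ.ne_iff.2 hg |>.trans_eq (map_zero _))) ?_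
  linear_combination h'

theorem exists_mem_span_mul_eq_of_algHom [IsAlgClosed F] {i : E →ₐ[C] M}
    (hi : Function.Injective
      (Algebra.TensorProduct.productLeftAlgHom (Algebra.ofId F M) i : F ⊗[C] E →ₐ[F] M))
    {ν : A →ₐ[C] Q} (hν : Function.Injective ν) {a : A →ₐ[C] F} (ha : Function.Injective a)
    {z w : E ⊗[C] A} {g α β : E ⊗[C] Q} (hg : g ≠ 0) (hβ : β ≠ 0)
    (hz : Algebra.TensorProduct.map (.id C E) ν z = g * α)
    (hw : Algebra.TensorProduct.map (.id C E) ν w = g * β) {x : M}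
    (h : x ⊗ₜ 1 * tensorMap F i a w = tensorMap F i a z) :
    ∃ y ∈ Submodule.span F (i '' (coeffSpace α ⊔ coeffSpace β : Submodule C E)),
      ∃ y' ∈ Submodule.span F (i '' (coeffSpace α ⊔ coeffSpace β : Submodule C E)),
        y' ≠ 0 ∧ x * y' = y := by
  have := ha.isDomain a.toRingHom
  obtain ⟨Ω, _, _, j, v, hv⟩ := exists_field_amalgam ha hν
  let _ : Algebra F Ω := (j : F →+* Ω).toAlgebra
  have : IsScalarTower C F Ω := .of_algebraMap_eq fun c ↦ (j.commutes c).symm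
  have : IsDomain (M ⊗[F] Ω) := isDomain_tensorProduct M Ω
  have ne_zero {t : E ⊗[C] Q} (ht : t ≠ 0) : tensorMap F i v t ≠ 0 :=
    (tensorMap_injective F hi v.injective).ne_iff.2 ht |>.trans_eq (map_zero _)
  replace hv : ((Algebra.ofId F Ω).restrictScalars C).comp a = v.comp ν := hv
  let J := Algebra.TensorProduct.map (.id F M) (Algebra.ofId F Ω)
  have hJ (t) : J (tensorMap F i a t) =
      tensorMap F i v (Algebra.TensorProduct.map (.id C E) ν t) := map_tensorMap F hv i t
  have hJx : J (x ⊗ₜ 1) = x ⊗ₜ 1 := by simp [J]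
  have h' := congrArg J h
  simp only [map_mul, hJ, hJx, hz, hw] at h'
  have hx : x ⊗ₜ 1 * tensorMap F i v β = tensorMap F i v α :=
    mul_left_cancel₀ (ne_zero hg) (by linear_combination h')
  obtain ⟨y, hy, y', hy', hne, hyy'⟩ := exists_mem_span_mul_eq (ne_zero hβ) hx
  exact ⟨y, Submodule.span_mono (Set.image_mono (SetLike.coe_subset_coe.2 le_sup_left)) hy, y',
    Submodule.span_mono (Set.image_mono (SetLike.coe_subset_coe.2 le_sup_right)) hy', hne, hyy'⟩

end Amalgam

section ConstantsEval

variable {k E M L A : Type*} [Field k] [Differential k] [Field E] [Algebra k E]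
  [Field M] [Differential M] [Algebra k M] [DifferentialAlgebra k M] [Field L] [Differential L]
  [Algebra k L] [DifferentialAlgebra k L] [CommRing A] [Algebra (constants k) A]

/-- The evaluation `e ⊗ a ↦ f e * κ a` of tensors whose right factors are sent to constants. -/
noncomputable def constantsEval (f : E →ₐ[k] M) (κ : A →ₐ[constants k] constants M) :
    E ⊗[constants k] A →ₐ[constants k] M :=
  Algebra.TensorProduct.productMap (f.restrictScalars (constants k))
    ((IsScalarTower.toAlgHom (constants k) (constants M) M).comp κ)

theorem constantsEval_tmul (f : E →ₐ[k] M) (κ : A →ₐ[constants k] constants M) (e : E) (a : A) :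
    constantsEval f κ (e ⊗ₜ a) = f e * κ a :=
  Algebra.TensorProduct.productMap_apply_tmul ..

theorem map_constantsEval (f : E →ₐ[k] M) (κ : A →ₐ[constants k] constants M) {g : M →ₐ[k] L}
    (hg : IsDifferentialHom (g : M →+* L)) (z : E ⊗[constants k] A) :
    g (constantsEval f κ z) = constantsEval (g.comp f) ((constantsMap g hg).comp κ) z := by
  induction z with
  | zero => simp only [map_zero]
  | add x y hx hy => simp only [map_add, hx, hy]
  | tmul e a =>
    simp only [constantsEval_tmul, map_mul]
    rfl

theorem rid_tensorMap_constants (f : E →ₐ[k] M) (κ : A →ₐ[constants k] constants M)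
    (z : E ⊗[constants k] A) : Algebra.TensorProduct.rid (constants M) (constants M) M
      (tensorMap (constants M) (f.restrictScalars (constants k)) κ z) = constantsEval f κ z := by
  induction z with
  | zero => simp only [map_zero]
  | add x y hx hy => simp only [map_add, hx, hy]
  | tmul e a => simp [constantsEval_tmul, Subfield.smul_def, mul_comm]

theorem productMap_tensorMap_constants [Algebra M L] [DifferentialAlgebra M L]
    [IsScalarTower k M L] (i : E →ₐ[k] M) (a : A →ₐ[constants k] constants L)
    (z : E ⊗[constants k] A) : Algebra.TensorProduct.productMap
      (IsScalarTower.toAlgHom (constants M) M L)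
      (IsScalarTower.toAlgHom (constants M) (constants L) L)
      (tensorMap (constants M) (i.restrictScalars (constants k)) a z) =
        constantsEval ((IsScalarTower.toAlgHom k M L).comp i) a z := by
  have : IsScalarTower (constants k) (constants M) L :=
    .of_algebraMap_eq fun c ↦ IsScalarTower.algebraMap_apply k M L c
  exact productMap_tensorMap ..

end ConstantsEval

section Semistable

variable {k E K : Type u} [Field k] [CharZero k] [Differential k] [Field E] [Differential E]
  [Algebra k E] [DifferentialAlgebra k E] [Field K] [Differential K] [Algebra k K]
  [DifferentialAlgebra k K] {A Q : Type*} [CommRing A] [Algebra (constants k) A] [Field Q]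
  [Algebra (constants k) Q]

theorem productLeftAlgHom_constantsMap_injective [Differential.ContainConstants k E]
    [IsDomain (E ⊗[k] K)] {M : Type*} [Field M] [Differential M] [Algebra k M]
    [DifferentialAlgebra k M] [IsDomain (M ⊗[k] K)] {i : E →ₐ[k] M}
    (hi : IsDifferentialHom (i : E →+* M))
    {κ : A →ₐ[constants k] constants (FreeCompositum k E K)} (hκ : Function.Injective κ) :
    Function.Injective (Algebra.TensorProduct.productLeftAlgHom
      (Algebra.ofId (constants M) (constants (FreeCompositum k M K)))
      ((constantsMap (FreeCompositum.map K i) (FreeCompositum.isDifferentialHom_map hi)).comp κ) :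
        constants M ⊗[constants k] A →ₐ[constants M] constants (FreeCompositum k M K)) := by
  have := containConstants_of_tower (k := k) (M := E)
  have : IsScalarTower (constants k) (constants M) (FreeCompositum k M K) :=
    .of_algebraMap_eq fun c ↦ IsScalarTower.algebraMap_apply k M _ c
  have : Module.Flat (constants k) (constants M) := .of_free
  have h₁ := FreeCompositum.productLeftAlgHom_map_injective (K := K) <|
    productLeftAlgHom_injective (constants M) (f := i.restrictScalars (constants k))
      deriv_algebraMap_constants hi
  let v : A →ₐ[constants k] FreeCompositum k E K :=
    (IsScalarTower.toAlgHom (constants k) (constants (FreeCompositum k E K)) _).comp κ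
  have hv : Function.Injective v := Subtype.val_injective.comp hκ
  have h₂ := Module.Flat.lTensor_preserves_injective_linearMap (M := constants M) v.toLinearMap hv
  refine .of_comp (f := algebraMap (constants (FreeCompositum k M K)) (FreeCompositum k M K)) ?_
  suffices h : ∀ z, algebraMap (constants (FreeCompositum k M K)) (FreeCompositum k M K)
      (Algebra.TensorProduct.productLeftAlgHom
        (Algebra.ofId (constants M) (constants (FreeCompositum k M K)))
        ((constantsMap (FreeCompositum.map K i) (FreeCompositum.isDifferentialHom_map hi)).comp κ)
        z) = Algebra.TensorProduct.productLeftAlgHom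
          (Algebra.ofId (constants M) (FreeCompositum k M K))
          ((FreeCompositum.map K i).restrictScalars (constants k))
          (v.toLinearMap.lTensor (constants M) z) from
    fun x y hxy ↦ h₂ <| h₁ <| (h x).symm.trans <| (hxy : _).trans (h y)
  intro z
  induction z with
  | zero => simp only [map_zero]
  | add x y hx hy => simp only [map_add, hx, hy]
  | tmul c a =>
    simp only [LinearMap.lTensor_tmul]
    rfl

theorem map_constantsEval_inl [IsDomain (E ⊗[k] K)] {M : Type*} [Field M]
    [Differential M] [Algebra k M] [DifferentialAlgebra k M] [IsDomain (M ⊗[k] K)] {i : E →ₐ[k] M}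
    (hi : IsDifferentialHom (i : E →+* M))
    (κ : A →ₐ[constants k] constants (FreeCompositum k E K)) (z : E ⊗[constants k] A) :
    FreeCompositum.map K i (constantsEval (FreeCompositum.inl k E K) κ z) =
      Algebra.TensorProduct.productMap
        (IsScalarTower.toAlgHom (constants M) M (FreeCompositum k M K))
        (IsScalarTower.toAlgHom (constants M) (constants (FreeCompositum k M K)) _)
        (tensorMap (constants M) (i.restrictScalars (constants k))
          ((constantsMap (FreeCompositum.map K i)
            (FreeCompositum.isDifferentialHom_map hi)).comp κ) z) := by
  have h : (FreeCompositum.map K i).comp (FreeCompositum.inl k E K) =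
      (IsScalarTower.toAlgHom k M (FreeCompositum k M K)).comp i :=
    AlgHom.ext fun e ↦ FreeCompositum.map_inl i e
  rw [productMap_tensorMap_constants, ← h]
  exact map_constantsEval _ κ _ z

theorem isSemistable_coeffSpace_sup [Differential.ContainConstants k E]
    [IsAlgClosed (constants k)] [∀ (M : Type u) [Field M] [Algebra k M], IsDomain (M ⊗[k] K)]
    {κ : A →ₐ[constants k] constants (FreeCompositum k E K)}
    (hκ : Function.Injective κ) {ν : A →ₐ[constants k] Q} (hν : Function.Injective ν)
    {z w : E ⊗[constants k] A} {g α β : E ⊗[constants k] Q} (hg : g ≠ 0) (hβ : β ≠ 0)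
    (hz : Algebra.TensorProduct.map (.id (constants k) E) ν z = g * α)
    (hw : Algebra.TensorProduct.map (.id (constants k) E) ν w = g * β)
    (hαβ : ∀ t, β ∣ α * t → β ∣ t) {x : K}
    (h : FreeCompositum.inr k E K x * constantsEval (FreeCompositum.inl k E K) κ w =
      constantsEval (FreeCompositum.inl k E K) κ z) :
    IsSemistable (k := k) (coeffSpace α ⊔ coeffSpace β) := by
  intro M _ _ _ _ _ i σ hi hσ
  have := hi.differentialAlgebra
  have := containConstants_of_tower (k := k) (M := E)
  have injective {f : E →ₐ[k] M} (hf : IsDifferentialHom (f : E →+* M)) :=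
    productLeftAlgHom_injective (constants M) (f := f.restrictScalars (constants k))
      deriv_algebraMap_constants hf
  refine exists_forall_mem_coeffSpace_eq_mul_of_algHom (injective hi) (injective hσ) hν
    (productLeftAlgHom_constantsMap_injective hi hκ)
    (productLeftAlgHom_constantsMap_injective hσ hκ) hg hβ hz hw hαβ ?_
  refine productMap_constants_injective (M := M) (L := FreeCompositum k M K) ?_
  have hi' := congrArg (FreeCompositum.map K i) h
  have hσ' := congrArg (FreeCompositum.map K σ) h
  rw [map_mul, FreeCompositum.map_inr] at hi' hσ'
  rw [map_mul, map_mul, ← map_constantsEval_inl hi, ← map_constantsEval_inl hi,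
    ← map_constantsEval_inl hσ, ← map_constantsEval_inl hσ, ← hi', ← hσ']
  ring

end Semistable

section DifferentialAmalgam

theorem exists_differential_field_amalgam {k K N E : Type u} [Field k] [CharZero k] [Field K]
    [Differential K] [Algebra k K] [Field N] [Differential N] [Algebra k N] [Field E]
    [Differential E] [Algebra k E] {r : K →ₐ[k] N}
    (hr : IsDifferentialHom (r : K →+* N)) {s : K →ₐ[k] E} (hs : IsDifferentialHom (s : K →+* E)) :
    ∃ (M : Type u) (_ : Field M) (_ : CharZero M) (_ : IsAlgClosed M) (_ : Differential M)
      (_ : Algebra k M) (p : N →ₐ[k] M) (σ : E →ₐ[k] M), IsDifferentialHom (p : N →+* M) ∧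
        IsDifferentialHom (σ : E →+* M) ∧ ∀ x, σ (s x) = p (r x) := by
  obtain ⟨Ω, _, _, g₁, g₂, hg⟩ := exists_field_amalgam (f₁ := r) (f₂ := s) r.injective s.injective
  have : CharZero Ω := charZero_of_injective_algebraMap (algebraMap k Ω).injective
  let _ : Algebra K N := (r : K →+* N).toAlgebra
  let _ : Algebra K E := (s : K →+* E).toAlgebra
  let _ : Algebra K Ω := ((g₁.comp r : K →ₐ[k] Ω) : K →+* Ω).toAlgebra
  have : DifferentialAlgebra K N := ⟨fun x ↦ (hr x).symm⟩
  have : DifferentialAlgebra K E := ⟨fun x ↦ (hs x).symm⟩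
  have : CharZero K := charZero_of_injective_algebraMap (algebraMap k K).injective
  let φ : N →ₐ[K] Ω := { g₁ with commutes' := fun _ ↦ rfl }
  let ψ : E →ₐ[K] Ω := { g₂ with commutes' := fun x ↦ (DFunLike.congr_fun hg x).symm }
  obtain ⟨M, _, _, _, _, _, p, σ, hp, hσ, -⟩ := exists_differential_amalgam φ ψ
  let _ : Algebra k M := ((algebraMap K M).comp (algebraMap k K)).toAlgebra
  refine ⟨M, inferInstance, inferInstance, inferInstance, inferInstance, inferInstance,
    { p with commutes' := fun c ↦ ?_ }, { σ with commutes' := fun c ↦ ?_ }, hp, hσ,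
    fun x ↦ (σ.commutes x).trans (p.commutes x).symm⟩
  · exact (congrArg p (r.commutes c).symm).trans (p.commutes _)
  · exact (congrArg σ (s.commutes c).symm).trans (σ.commutes _)

end DifferentialAmalgam

section ConstantsEval

variable {k E M A : Type*} [Field k] [Differential k] [Field E] [Algebra k E] [Field M]
  [Differential M] [Algebra k M] [DifferentialAlgebra k M]

theorem exists_fg_constantsEval_eq {f : E →ₐ[k] M} {a b : M}
    (ha : a ∈ Submodule.span (constants M) (Set.range f))
    (hb : b ∈ Submodule.span (constants M) (Set.range f)) :
    ∃ S : Subalgebra (constants k) (constants M), S.FG ∧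
      ∃ z w : E ⊗[constants k] S, constantsEval f S.val z = a ∧ constantsEval f S.val w = b := by
  have exists_tensor {y : M} (hy : y ∈ Submodule.span (constants M) (Set.range f)) :
      ∃ z, constantsEval f (.id (constants k) (constants M)) z = y := by
    obtain ⟨z, hz, -⟩ := exists_forall_contract_mem_of_mem_span (C := constants k)
      (f := f.restrictScalars (constants k)) (T := ⊤) (by simpa using hy)
    exact ⟨z, hz⟩
  have constantsEval_map (S : Subalgebra (constants k) (constants M)) (z : E ⊗[constants k] S) :
      constantsEval f (.id _ _) (Algebra.TensorProduct.map (.id E E) S.val z) =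
        constantsEval f S.val z := by
    induction z with
    | zero => simp only [map_zero]
    | add x y hx hy => simp only [map_add, hx, hy]
    | tmul e a => simp [constantsEval_tmul]
  obtain ⟨z, rfl⟩ := exists_tensor ha
  obtain ⟨w, rfl⟩ := exists_tensor hb
  obtain ⟨S, hS, ⟨z, rfl⟩, ⟨w, rfl⟩⟩ := exists_fg_mem_baseChange_mem_baseChange z w
  exact ⟨S, hS, z, w, (constantsEval_map S z).symm, (constantsEval_map S w).symm⟩

end ConstantsEval

theorem constantsEval_injective {k E M A : Type*} [Field k] [Differential k] [Field E]
    [Differential E] [Algebra k E] [DifferentialAlgebra k E] [Differential.ContainConstants k E]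
    [Field M] [Differential M] [Algebra k M] [DifferentialAlgebra k M] [CommRing A]
    [Algebra (constants k) A] {f : E →ₐ[k] M} (hf : IsDifferentialHom (f : E →+* M))
    {κ : A →ₐ[constants k] constants M} (hκ : Function.Injective κ) :
    Function.Injective (constantsEval f κ) := by
  have := containConstants_of_tower (k := k) (M := E)
  have h₁ : Function.Injective (constantsEval f (.id (constants k) (constants M))) :=
    productMap_injective (constants M) (f := f.restrictScalars (constants k)) <|
      productLeftAlgHom_injective (constants M) deriv_algebraMap_constants hf
  have h₂ := Module.Flat.lTensor_preserves_injective_linearMap (M := E) κ.toLinearMap hκ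
  have h (z : E ⊗[constants k] A) : constantsEval f κ z =
      constantsEval f (.id (constants k) (constants M)) (κ.toLinearMap.lTensor E z) := by
    induction z with
    | zero => simp only [map_zero]
    | add x y hx hy => simp only [map_add, hx, hy]
    | tmul e a => simp [constantsEval_tmul]
  exact fun z w hzw ↦ h₂ (h₁ ((h z).symm.trans (hzw.trans (h w))))

section Ratio

variable {k E : Type u} [Field k] [Differential k] [Field E] [Differential E]
  [Algebra k E] [DifferentialAlgebra k E] [Differential.ContainConstants k E]

theorem IsSemistable.exists_mem_mul_eq {T : Submodule (constants k) E} (hT : IsSemistable T)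
    {M : Type u} [Field M] [CharZero M] [IsAlgClosed M] [Differential M] [Algebra k M]
    {i σ : E →ₐ[k] M} (hi : IsDifferentialHom (i : E →+* M)) (hσ : IsDifferentialHom (σ : E →+* M))
    {x : E} {y y' : M} (hy : y ∈ Submodule.span (constants M) (i '' T))
    (hy' : y' ∈ Submodule.span (constants M) (i '' T)) (hy0 : y' ≠ 0) (h : σ x * y' = y) :
    ∃ t ∈ T, ∃ t' ∈ T, t' ≠ 0 ∧ x * t' = t := by
  have := hi.differentialAlgebra
  have := containConstants_of_tower (k := k) (M := E)
  obtain ⟨m, hm, hiσ⟩ := hT hσ hi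
  have hle : Submodule.span (constants M) (i '' T) ≤
      (Submodule.span (constants M) (σ '' T)).map (LinearMap.mulLeft (constants M) m) := by
    rw [Submodule.span_le]
    rintro _ ⟨t, ht, rfl⟩
    obtain ⟨w, hw, hwt⟩ := hiσ t ht
    exact ⟨w, hw, hwt.symm⟩
  obtain ⟨w, hw, rfl⟩ := hle hy
  obtain ⟨w', hw', rfl⟩ := hle hy'
  simp only [LinearMap.mulLeft_apply] at h hy0
  exact exists_mem_mul_eq_of_mem_span (f := σ.restrictScalars (constants k))
    (productMap_injective (constants M) <|
      productLeftAlgHom_injective (constants M) deriv_algebraMap_constants hσ)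
    hw hw' (right_ne_zero_of_mul hy0) (mul_left_cancel₀ hm ((mul_left_comm ..).trans h))

theorem exists_mem_coeffSpace_mul_eq {A Q : Type*} [CommRing A] [Algebra (constants k) A] [Field Q]
    [Algebra (constants k) Q] {M : Type u} [Field M] [CharZero M] [IsAlgClosed M] [Differential M]
    [Algebra k M] [DifferentialAlgebra k M] {i σ : E →ₐ[k] M}
    (hi : IsDifferentialHom (i : E →+* M)) (hσ : IsDifferentialHom (σ : E →+* M))
    {a : A →ₐ[constants k] constants M} (ha : Function.Injective a)
    {ν : A →ₐ[constants k] Q} (hν : Function.Injective ν)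
    {z w : E ⊗[constants k] A} {g α β : E ⊗[constants k] Q} (hg : g ≠ 0) (hβ : β ≠ 0)
    (hz : Algebra.TensorProduct.map (.id (constants k) E) ν z = g * α)
    (hw : Algebra.TensorProduct.map (.id (constants k) E) ν w = g * β)
    (hT : IsSemistable (k := k) (coeffSpace α ⊔ coeffSpace β)) {x : E}
    (h : σ x * constantsEval i a w = constantsEval i a z) :
    ∃ t ∈ coeffSpace α ⊔ coeffSpace β, ∃ t' ∈ coeffSpace α ⊔ coeffSpace β,
      t' ≠ 0 ∧ x * t' = t := by
  have := containConstants_of_tower (k := k) (M := E)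
  have h' : σ x ⊗ₜ 1 * tensorMap (constants M) (i.restrictScalars (constants k)) a w =
      tensorMap (constants M) (i.restrictScalars (constants k)) a z := by
    apply (Algebra.TensorProduct.rid (constants M) (constants M) M).injective
    rw [map_mul, rid_tensorMap_constants, rid_tensorMap_constants, ← h]
    simp
  obtain ⟨y, hy, y', hy', hy0, hxy⟩ := exists_mem_span_mul_eq_of_algHom
    (productLeftAlgHom_injective (constants M) (f := i.restrictScalars (constants k))
      deriv_algebraMap_constants hi) hν ha hg hβ hz hw h'
  exact hT.exists_mem_mul_eq hi hσ hy hy' hy0 hxy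

end Ratio

section StrongNormality

/-- The embedding condition in the definition of a strongly normal extension `E` of `k`: any two
differential `k`-embeddings of `E` have the same image up to constants. -/
def IsNormalUpToConstants (k E : Type u) [Field k] [Field E] [Differential E] [Algebra k E] :
    Prop :=
  ∀ ⦃M : Type u⦄ [Field M] [CharZero M] [Differential M] [Algebra k M] ⦃i σ : E →ₐ[k] M⦄,
    IsDifferentialHom (i : E →+* M) → IsDifferentialHom (σ : E →+* M) →
    ∀ e, σ e ∈ Subfield.closure (Set.range i ∪ {m | m′ = 0})

variable {k E K : Type u} [Field k] [CharZero k] [Differential k] [Field E] [Differential E]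
  [Algebra k E] [DifferentialAlgebra k E] [Field K] [Differential K] [Algebra k K]
  [DifferentialAlgebra k K]

theorem exists_fg_inr_mul_constantsEval_eq [IsDomain (E ⊗[k] K)] {M : Type u} [Field M]
    [Differential M] [Algebra k M] [DifferentialAlgebra k M] {p : FreeCompositum k E K →ₐ[k] M}
    (hp : IsDifferentialHom (p : FreeCompositum k E K →+* M)) {x : K}
    (hx : p (FreeCompositum.inr k E K x) ∈ Subfield.closure
      (Set.range (p.comp (FreeCompositum.inl k E K)) ∪ {c | c′ = 0})) :
    ∃ S : Subalgebra (constants k) (constants (FreeCompositum k E K)), S.FG ∧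
      ∃ z w : E ⊗[constants k] S, w ≠ 0 ∧
        FreeCompositum.inr k E K x * constantsEval (FreeCompositum.inl k E K) S.val w =
          constantsEval (FreeCompositum.inl k E K) S.val z := by
  let _ : Algebra (FreeCompositum k E K) M := (p : FreeCompositum k E K →+* M).toAlgebra
  have : DifferentialAlgebra (FreeCompositum k E K) M := ⟨fun y ↦ (hp y).symm⟩
  have : IsScalarTower k (FreeCompositum k E K) M := .of_algebraMap_eq fun c ↦ (p.commutes c).symm
  obtain ⟨a, ha, b, hb, hb0, hab⟩ := exists_mem_span_constants_mul_eq
    (f := FreeCompositum.inl k E K) (y := FreeCompositum.inr k E K x) hx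
  obtain ⟨S, hS, z, w, rfl, rfl⟩ := exists_fg_constantsEval_eq ha hb
  exact ⟨S, hS, z, w, ne_zero_of_map hb0, hab⟩

variable [Differential.ContainConstants k E]

theorem exists_injective_of_fg_constants_freeCompositum [IsAlgClosed (constants k)]
    [IsDomain (E ⊗[k] K)] {ι : Type*} (ψ : K →ₐ[k] FractionRing (MvPolynomial ι k))
    {S : Subalgebra (constants k) (constants (FreeCompositum k E K))} (hS : S.FG) :
    ∃ (s : Finset ι) (ν : S →ₐ[constants k] FractionRing (MvPolynomial s (constants k))),
      Function.Injective ν := by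
  have := containConstants_of_tower (k := k) (M := E)
  have : Algebra.FiniteType (constants k) S := S.fg_iff_finiteType.1 hS
  obtain ⟨Ψ, hΨ⟩ := exists_injective_tensorProduct E ψ
  let Λ : FreeCompositum k E K →ₐ[E] FractionRing (MvPolynomial ι E) :=
    IsFractionRing.liftAlgHom hΨ
  let v : S →ₐ[constants k] FreeCompositum k E K :=
    (IsScalarTower.toAlgHom _ (constants (FreeCompositum k E K)) _).comp S.val
  let θ : S →ₐ[constants k] FractionRing (MvPolynomial ι E) :=
    (Λ.restrictScalars (constants k)).comp v
  have hinl : Function.Injective (constantsEval (FreeCompositum.inl k E K) S.val) :=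
    constantsEval_injective (f := FreeCompositum.inl k E K) (κ := S.val)
      FreeCompositum.isDifferentialHom_inl Subtype.val_injective
  have h (z : E ⊗[constants k] S) : Algebra.TensorProduct.productLeftAlgHom (Algebra.ofId E _) θ z =
      Λ (constantsEval (FreeCompositum.inl k E K) S.val z) := by
    induction z with
    | zero => simp only [map_zero]
    | add x y hx hy => simp only [map_add, hx, hy]
    | tmul e c =>
      rw [constantsEval_tmul, map_mul]
      exact congrArg (· * Λ (v c)) (Λ.commutes e).symm
  have hθ : Function.Injective
      (Algebra.TensorProduct.productLeftAlgHom (Algebra.ofId E _) θ) := fun z w hzw ↦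
    hinl ((Λ : FreeCompositum k E K →+* FractionRing (MvPolynomial ι E)).injective
      ((h z).symm.trans (hzw.trans (h w))))
  exact exists_injective_fractionRing_mvPolynomial hθ

end StrongNormality

theorem exists_map_eq_mul_map_eq_mul_coprime {C E A σ : Type*} [Field C] [IsAlgClosed C] [Field E]
    [Algebra C E] [CommRing A] [Algebra C A] {ν : A →ₐ[C] FractionRing (MvPolynomial σ C)}
    (hν : Function.Injective ν) (z : E ⊗[C] A) {w : E ⊗[C] A} (hw : w ≠ 0) :
    ∃ g α β : E ⊗[C] FractionRing (MvPolynomial σ C), g ≠ 0 ∧ β ≠ 0 ∧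
      Algebra.TensorProduct.map (.id C E) ν z = g * α ∧
      Algebra.TensorProduct.map (.id C E) ν w = g * β ∧ ∀ t, β ∣ α * t → β ∣ t := by
  have := isDomain_tensorProduct (C := C) E (FractionRing (MvPolynomial σ C))
  have := uniqueFactorizationMonoid_tensorProduct C E σ
  have hw' : Algebra.TensorProduct.map (.id C E) ν w ≠ 0 := fun h ↦
    hw (Module.Flat.lTensor_preserves_injective_linearMap ν.toLinearMap hν
      (h.trans (map_zero _).symm))
  obtain ⟨g, α, β, hg, hz, hw, hαβ⟩ := exists_mul_eq_mul_eq_coprime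
    (Algebra.TensorProduct.map (.id C E) ν z) hw'
  exact ⟨g, α, β, hg, right_ne_zero_of_mul (hw ▸ hw'), hz, hw, hαβ⟩

theorem exists_isSemistable_mul_eq {k K E : Type u} [Field k] [CharZero k] [Differential k]
    [Field K] [Differential K] [Algebra k K] [DifferentialAlgebra k K] [Field E] [Differential E]
    [Algebra k E] [DifferentialAlgebra k E] [Differential.ContainConstants k E]
    [Algebra K E] [DifferentialAlgebra K E] [IsScalarTower k K E]
    [IsAlgClosed (constants k)] (hE : IsNormalUpToConstants k E) {ι : Type*}
    (ψ : K →ₐ[k] FractionRing (MvPolynomial ι k)) (x : K) :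
    ∃ T : Submodule (constants k) E, Module.Finite (constants k) T ∧ IsSemistable T ∧
      ∃ t ∈ T, ∃ t' ∈ T, t' ≠ 0 ∧ algebraMap K E x * t' = t := by
  have hK (M : Type u) [Field M] [Algebra k M] : IsDomain (M ⊗[k] K) :=
    isDomain_tensorProduct_of_algHom M ψ
  have := hK E
  have hs : IsDifferentialHom ((IsScalarTower.toAlgHom k K E : K →ₐ[k] E) : K →+* E) :=
    fun x ↦ (deriv_algebraMap x).symm
  obtain ⟨M, _, _, _, _, _, p, σ, hp, hσ, hpσ⟩ := exists_differential_field_amalgam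
    (r := FreeCompositum.inr k E K) (s := IsScalarTower.toAlgHom k K E)
    FreeCompositum.isDifferentialHom_inr hs
  have := hσ.differentialAlgebra
  have hi : IsDifferentialHom ((p.comp (FreeCompositum.inl k E K) : E →ₐ[k] M) : E →+* M) :=
    fun e ↦ (congrArg p (FreeCompositum.isDifferentialHom_inl e)).trans (hp _)
  obtain ⟨S, hS, z, w, hw0, hzw⟩ := exists_fg_inr_mul_constantsEval_eq (p := p) (x := x) hp
    (hpσ x ▸ hE hi hσ _)
  obtain ⟨s, ν, hν⟩ := exists_injective_of_fg_constants_freeCompositum ψ hS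
  obtain ⟨g, α, β, hg, hβ, hz, hw, hαβ⟩ := exists_map_eq_mul_map_eq_mul_coprime hν z hw0
  have hT := isSemistable_coeffSpace_sup (κ := S.val) Subtype.val_injective hν hg hβ hz hw hαβ hzw
  refine ⟨coeffSpace α ⊔ coeffSpace β, inferInstance, hT, ?_⟩
  refine exists_mem_coeffSpace_mul_eq (i := p.comp (FreeCompositum.inl k E K)) (σ := σ)
    (a := (constantsMap p hp).comp S.val) hi hσ ?_ hν hg hβ hz hw hT ?_
  · exact (constantsMap p hp : constants (FreeCompositum k E K) →+* constants M).injective.comp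
      Subtype.val_injective
  · rw [← map_constantsEval _ _ hp, ← map_constantsEval _ _ hp, ← hzw, map_mul]
    exact congrArg (· * _) (hpσ x)

/-! ### Picard–Vessiot subextensions -/

section FinitelyGenerated

open Algebra.TensorProduct IntermediateField

variable {k E : Type*} [Field k] [Field E] [Algebra k E]

-- An intermediate field `L` is determined by the ideal generated by the `x ⊗ 1 - 1 ⊗ x` with `x` in
-- `L`, so the ascending chain condition passes from `E ⊗ E` to intermediate fields.
theorem mem_of_includeLeftSubRight_mem_span {L : IntermediateField k E} {x : E}
    (hx : includeLeftSubRight k E x ∈ Ideal.span (includeLeftSubRight k E '' L)) : x ∈ L := by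
  let Φ : E ⊗[k] E →ₐ[k] E ⊗[L] E :=
    productMap ((includeLeft : E →ₐ[L] E ⊗[L] E).restrictScalars k)
      ((includeRight : E →ₐ[L] E ⊗[L] E).restrictScalars k)
  have hΦ (y : E) : Φ (includeLeftSubRight k E y) = includeLeftSubRight L E y := by
    simp [Φ, productMap_apply_tmul]
  have hle : Ideal.span (includeLeftSubRight k E '' L) ≤ RingHom.ker Φ := by
    rw [Ideal.span_le]
    rintro _ ⟨y, hy, rfl⟩
    exact (hΦ y).trans (includeLeftSubRight_algebraMap_zero (⟨y, hy⟩ : L))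
  obtain ⟨y, rfl⟩ := (Algebra.IsEffective.of_faithfullyFlat L E x).1 ((hΦ x).symm.trans (hle hx))
  exact y.2

theorem fg_of_essFiniteType [Algebra.EssFiniteType k E] (K : IntermediateField k E) : K.FG := by
  have : IsNoetherianRing (E ⊗[k] E) := Algebra.EssFiniteType.isNoetherianRing E _
  have hfg := (isNoetherianRing_iff_ideal_fg (E ⊗[k] E)).1 this
    (Ideal.span (includeLeftSubRight k E '' K))
  obtain ⟨F, hF, hspan⟩ := Submodule.fg_span_iff_fg_span_finset_subset _ |>.1 hfg
  obtain ⟨s, hsK, hs, hsF⟩ := Set.exists_subset_image_finite_and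
    (p := fun t ↦ t = (F : Set (E ⊗[k] E))).1 ⟨F, hF, F.finite_toSet, rfl⟩
  refine fg_def.2 ⟨s, hs, le_antisymm (adjoin_le_iff.2 hsK) fun x hx ↦ ?_⟩
  have hx' : includeLeftSubRight k E x ∈ Ideal.span (includeLeftSubRight k E '' s) :=
    hsF ▸ hspan.le (Ideal.subset_span ⟨x, hx, rfl⟩)
  exact mem_of_includeLeftSubRight_mem_span
    (Ideal.span_mono (Set.image_mono (subset_adjoin k s)) hx')

end FinitelyGenerated

theorem exists_isStable_algebraMap_mem {k K E : Type u} [Field k] [CharZero k] [Differential k]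
    [Field K] [Differential K] [Algebra k K] [DifferentialAlgebra k K] [Field E] [Differential E]
    [Algebra k E] [DifferentialAlgebra k E] [Differential.ContainConstants k E]
    [Algebra K E] [DifferentialAlgebra K E] [IsScalarTower k K E] [Algebra.EssFiniteType k E]
    [IsAlgClosed (constants k)] (hE : IsNormalUpToConstants k E) {ι : Type*}
    (ψ : K →ₐ[k] FractionRing (MvPolynomial ι k)) :
    ∃ T : Submodule (constants k) E, Module.Finite (constants k) T ∧ IsStable T ∧
      ∀ L : IntermediateField k E, (T : Set E) ⊆ L → ∀ x, algebraMap K E x ∈ L := by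
  have exists_ratio (x : K) : ∃ S : Submodule (constants k) E, Module.Finite (constants k) S ∧
      IsStable S ∧ ∃ p ∈ S, ∃ q ∈ S, algebraMap K E x = q / p := by
    obtain ⟨T, _, hT, a, ha, b, hb, hb0, hab⟩ := exists_isSemistable_mul_eq hE ψ x
    obtain ⟨S, hSfin, hS, h⟩ := hT.exists_isStable
    obtain ⟨p, hp, q, hq, hq0, hpq⟩ := h a ha b hb hb0
    refine ⟨S, hSfin, hS, q, hq, p, hp, eq_div_of_mul_eq hq0 (mul_left_cancel₀ hb0 ?_)⟩
    rw [hpq, ← hab]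
    ring
  choose S _ hS p hp q hq hpq using exists_ratio
  obtain ⟨s, hs⟩ := fg_of_essFiniteType (IsScalarTower.toAlgHom k K E).fieldRange
  have hsK (x : s) : ∃ y : K, algebraMap K E y = x :=
    AlgHom.mem_fieldRange.1 <| hs ▸ IntermediateField.subset_adjoin k _ x.2
  choose y hy using hsK
  obtain ⟨T, hTfin, hT, hST⟩ := exists_finite_isStable_le Finset.univ fun x ↦ hS (y x)
  refine ⟨T, hTfin, hT, fun L hL x ↦ ?_⟩
  have hle : (IsScalarTower.toAlgHom k K E).fieldRange ≤ L := by
    rw [← hs, IntermediateField.adjoin_le_iff]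
    intro z hz
    rw [SetLike.mem_coe, show z = _ from (hy ⟨z, hz⟩).symm, hpq]
    exact L.div_mem (hL (hST _ (Finset.mem_univ _) (hq _))) (hL (hST _ (Finset.mem_univ _) (hp _)))
  exact hle ⟨x, rfl⟩

section DiffGen

variable {E : Type u} [Field E] (D : E → E) (k : Subfield E) (S : Set E)

theorem le_diffGen : k ≤ diffGen D k S :=
  le_sInf fun _ h ↦ h.1

theorem subset_diffGen : S ⊆ diffGen D k S := fun _ hx ↦
  Subfield.mem_sInf.2 fun _ h ↦ h.2.1 hx

variable {D k S}

theorem apply_mem_diffGen {x : E} (hx : x ∈ diffGen D k S) : D x ∈ diffGen D k S :=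
  Subfield.mem_sInf.2 fun F h ↦ h.2.2 x (Subfield.mem_sInf.1 hx F h)

theorem diffGen_le_diffGen {S' : Set E} (h : S ⊆ diffGen D k S') :
    diffGen D k S ≤ diffGen D k S' :=
  sInf_le ⟨le_diffGen .., h, fun _ ↦ apply_mem_diffGen⟩

end DiffGen

section Subfield

variable {E : Type u} [Field E] [Differential E] {k : Subfield E}

/-- The differential field structure of a subfield closed under the derivation. -/
abbrev differentialSubfield (hk : ∀ x ∈ k, x′ ∈ k) : Differential k :=
  differentialOfLeibniz
    { toFun := fun x ↦ ⟨(x : E)′, hk x x.2⟩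
      map_zero' := Subtype.ext (map_zero Differential.deriv)
      map_add' := fun a b ↦ Subtype.ext (map_add Differential.deriv (a : E) b) }
    fun a b ↦ Subtype.ext (Derivation.leibniz _ (a : E) b)

theorem essFiniteType_of_isSN (h : IsSN (E := E) Differential.deriv k) :
    Algebra.EssFiniteType k E := by
  obtain ⟨-, ⟨s, hs⟩, -⟩ := h
  refine IntermediateField.fg_top_iff.1 ⟨s, eq_top_iff.2 fun x _ ↦ ?_⟩
  have hle : Subfield.closure (k ∪ s) ≤ (IntermediateField.adjoin k (s : Set E)).toSubfield :=
    Subfield.closure_le.2 <| Set.union_subset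
      (fun y hy ↦ IntermediateField.algebraMap_mem _ (⟨y, hy⟩ : k))
      (IntermediateField.subset_adjoin k _)
  exact hle (hs ▸ Subfield.mem_top x)

theorem isNormalUpToConstants_of_isSN (h : IsSN (E := E) Differential.deriv k) :
    IsNormalUpToConstants k E := fun M _ _ _ _ i σ hi hσ ↦
  h.2.2.2
    { carrier := M
      deriv := Differential.deriv
      deriv_add := map_add _
      deriv_mul := fun a b ↦ (Derivation.leibniz _ a b).trans <| by
        simp only [smul_eq_mul, mul_comm, add_comm] }
    i σ hi hσ fun x hx ↦ (σ.commutes ⟨x, hx⟩).trans (i.commutes ⟨x, hx⟩).symm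

theorem containConstants_of_isSN (h : IsSN (E := E) Differential.deriv k) :
    Differential.ContainConstants k E :=
  ⟨fun {x} hx ↦ ⟨⟨x, h.2.2.1 x hx⟩, rfl⟩⟩

variable [Differential k] [DifferentialAlgebra k E]

/-- The constants of `k` inside `E` are those of `k` as a differential field in its own right. -/
def constantsOfEquiv : constantsOf (Differential.deriv (R := E)) k ≃+* constants k where
  toFun x := ⟨⟨x, x.2.1⟩, trivial, Subtype.ext ((deriv_algebraMap (A := k) _).symm.trans x.2.2)⟩
  invFun x := ⟨x, x.1.2, (deriv_algebraMap x.1).trans (congrArg Subtype.val x.2.2)⟩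
  map_add' _ _ := rfl
  map_mul' _ _ := rfl

theorem IsStable.isPV_diffGen [CharZero k] [Differential.ContainConstants k E]
    {T : Submodule (constants k) E} [Module.Finite (constants k) T] (hT : IsStable T) :
    IsPV Differential.deriv k (diffGen Differential.deriv k T) := by
  obtain ⟨n, y, a, hli, hspan, ha, hy⟩ := hT.exists_linear_differential_equation
  have hyT : Set.range y ⊆ T := hspan ▸ Submodule.subset_span
  have hT_le : (T : Set E) ⊆ diffGen Differential.deriv k (Set.range y) := fun t ht ↦ by
    rw [SetLike.mem_coe, ← hspan, Submodule.mem_span_range_iff_exists_fun] at ht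
    obtain ⟨c, rfl⟩ := ht
    exact sum_mem fun j _ ↦
      mul_mem (le_diffGen _ _ _ (c j).1.2) (subset_diffGen _ _ _ (Set.mem_range_self j))
  refine ⟨n, a, le_diffGen .., fun x hx ↦ ?_, fun _ ↦ apply_mem_diffGen, fun x _ hx ↦ ?_,
    fun r ↦ ?_, y, fun j ↦ subset_diffGen _ _ _ (hyT ⟨j, rfl⟩), hy, fun c hc h j ↦ ?_, ?_⟩
  · exact (deriv_algebraMap (A := k) (B := E) ⟨x, hx⟩).symm ▸ SetLike.coe_mem _
  · obtain ⟨c, rfl⟩ := mem_range_of_deriv_eq_zero k hx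
    exact c.2
  · obtain ⟨c, hc⟩ := ha r
    exact hc ▸ c.2
  · exact congrArg (fun c : constants k ↦ ((c : k) : E)) <| Fintype.linearIndependent_iff.1 hli
      (fun j ↦ constantsOfEquiv ⟨c j, hc j⟩) h j
  · exact (diffGen_le_diffGen (hyT.trans (subset_diffGen ..))).antisymm (diffGen_le_diffGen hT_le)

end Subfield

end StronglyNormal

/-- If `E` is a strongly normal extension of `k` and the intermediate
differential field `K` embeds, as a field over `k`, into a purely transcendental extension
`k(Xᵢ : i ∈ ι)` of `k`, then `K` lies inside a Picard–Vessiot extension `L` of `k`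
intermediate between `k` and `E`. -/
theorem stmt1 {E : Type u} [Field E] [CharZero E] (D : Derivation ℤ E E)
    (k K : Subfield E)
    (hk : ∀ x ∈ k, D x ∈ k) (hK : ∀ x ∈ K, D x ∈ K)
    (hC : IsAlgClosed ↥(constantsOf D k))
    (hkK : k < K)
    (hSN : IsSN (⇑D) k)
    (hembed : ∃ (ι : Type u) (ψ : ↥K →+* FractionRing (MvPolynomial ι ↥k)),
      ∀ (x : E) (hx : x ∈ k),
        ψ ⟨x, hkK.le hx⟩ =
          algebraMap (MvPolynomial ι ↥k) (FractionRing (MvPolynomial ι ↥k))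
            (MvPolynomial.C ⟨x, hx⟩)) :
    ∃ L : Subfield E, K ≤ L ∧ IsPV (⇑D) k L := by
  obtain ⟨ι, ψ, hψ⟩ := hembed
  let _ : Differential E := ⟨D⟩
  let _ : Differential k := StronglyNormal.differentialSubfield hk
  let _ : Differential K := StronglyNormal.differentialSubfield hK
  let _ : Algebra k K := (Subfield.inclusion hkK.le).toAlgebra
  have : IsScalarTower k K E := .of_algebraMap_eq fun _ ↦ rfl
  have : DifferentialAlgebra k E := ⟨fun _ ↦ rfl⟩
  have : DifferentialAlgebra K E := ⟨fun _ ↦ rfl⟩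
  have : DifferentialAlgebra k K := ⟨fun _ ↦ rfl⟩
  have := StronglyNormal.essFiniteType_of_isSN hSN
  have := StronglyNormal.containConstants_of_isSN hSN
  have : IsAlgClosed (StronglyNormal.constants k) :=
    .of_ringEquiv _ _ StronglyNormal.constantsOfEquiv
  obtain ⟨T, _, hT, hKT⟩ := StronglyNormal.exists_isStable_algebraMap_mem
    (StronglyNormal.isNormalUpToConstants_of_isSN hSN) { ψ with commutes' := fun x ↦ hψ x x.2 }
  let L : IntermediateField k E :=
    (diffGen D k T).toIntermediateField fun c ↦ StronglyNormal.le_diffGen _ _ _ c.2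
  exact ⟨L.toSubfield, fun x hx ↦ hKT L (StronglyNormal.subset_diffGen ..) ⟨x, hx⟩,
    hT.isPV_diffGen⟩
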